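/- arXiv:2307.09461 — 6 statements merged into one kernel-verified Lean document; each statement's English description precedes it below -/
import Mathlib

section
/- For every finite oriented graph D and every choice of positive integers k and ℓ, there exists a finite oriented graph D* together with a surjective homomorphism ψ : V(D*) → V(D) such that: (i) the girth of D* is at least ℓ; (ii) for every oriented graph C with at most k vertices, there exists a homomorphism from D* to C if and only if there exists a homomorphism from D to C; and (iii) for every D-pointed oriented graph C with at most k vertices and for every homomorphism φ : V(D*) → V(C), there exists a unique homomorphism f : V(D) → V(C) such that φ = f ∘ ψ. -/
/-- An oriented graph on vertex type `V`: a loopless digraph in which for every pair of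
vertices at most one of the two opposite arcs is present, encoded as an irreflexive,
asymmetric adjacency relation. -/
structure OrientedGraph (V : Type) where
  Adj : V → V → Prop
  irrefl : ∀ v, ¬ Adj v v
  asymm : ∀ u v, Adj u v → ¬ Adj v u

/-- `f` is a homomorphism of oriented graphs from `D` to `C` (a `C`-colouring of `D`):
it maps arcs to arcs. -/
def IsHom {V W : Type} (D : OrientedGraph V) (C : OrientedGraph W) (f : V → W) : Prop :=
  ∀ ⦃x y⦄, D.Adj x y → C.Adj (f x) (f y)

/-- The oriented graph `G` has a directed cycle of length `m`: `m` distinct vertices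
cyclically joined by arcs. -/
def HasCycleOfLength {V : Type} (G : OrientedGraph V) (m : ℕ) : Prop :=
  ∃ c : ZMod m → V, Function.Injective c ∧ ∀ i, G.Adj (c i) (c (i + 1))

/-- The girth of `G` (the length of a shortest directed cycle, infinite if none) is at
least `ℓ`: there is no directed cycle of length less than `ℓ`. -/
def GirthAtLeast {V : Type} (G : OrientedGraph V) (ℓ : ℕ) : Prop :=
  ∀ m : ℕ, 0 < m → m < ℓ → ¬ HasCycleOfLength G m

/-- The girth of `G` is exactly `ℓ`: there is a directed cycle of length `ℓ` and none
shorter. -/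
def GirthEq {V : Type} (G : OrientedGraph V) (ℓ : ℕ) : Prop :=
  HasCycleOfLength G ℓ ∧ GirthAtLeast G ℓ

/-- `f` is an automorphism of the oriented graph `D`. -/
def IsAuto {V : Type} (D : OrientedGraph V) (f : V → V) : Prop :=
  Function.Bijective f ∧ ∀ x y, D.Adj x y ↔ D.Adj (f x) (f y)

/-- `D` is a core: every homomorphism from `D` to itself is an automorphism. -/
def IsCore {V : Type} (D : OrientedGraph V) : Prop :=
  ∀ f : V → V, IsHom D D f → IsAuto D f

/-- `C` is `D`-pointed: there do not exist two distinct `C`-colourings of `D` that agree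
on all but one vertex of `D`. -/
def IsPointedOf {VC VD : Type} (C : OrientedGraph VC) (D : OrientedGraph VD) : Prop :=
  ¬ ∃ f g : VD → VC, IsHom D C f ∧ IsHom D C g ∧ f ≠ g ∧
      ∃ v : VD, ∀ u : VD, u ≠ v → f u = g u

/-- `T` is a tournament: between any two distinct vertices there is an arc. -/
def IsTournament {V : Type} (T : OrientedGraph V) : Prop :=
  ∀ u v : V, u ≠ v → T.Adj u v ∨ T.Adj v u

/-- The oriented chromatic number of `D`: the minimum number of vertices of an oriented
graph `C` such that there exists a homomorphism from `D` to `C`. -/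
noncomputable def orientedChromaticNumber {V : Type} (D : OrientedGraph V) : ℕ :=
  sInf {k : ℕ | ∃ C : OrientedGraph (Fin k), ∃ f : V → Fin k, IsHom D C f}

/-! `D*` is the direct product of `D` with a digraph on a set `X` that has no short closed walk but
mixes like a random one. A homomorphism `φ` from the product to a small graph `C` colours each
copy `V(D) × {x}` in one of at most `|C| ^ |D|` ways, so some `f` occurs for a positive proportion
of the `x`, and mixing makes `f` a homomorphism. If `C` is `D`-pointed, mixing also shows that for
each `v` and each `c ≠ f v` only few `x` have `φ (v, x) = c`. Hence `φ` disagrees with `f ∘ ψ` on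
few copies only; by pointedness each such `x` has all its out-neighbours or all its in-neighbours
of the same kind, and expansion leaves no room for a small nonempty set with that property.

The digraph on `X` joins `v` to `v + y • (x, x², …, x ^ ℓ)` in `𝔽_p ^ ℓ`, for `x ≠ 0` and
`y ∈ {1, …, L}`. A short vanishing sum of steps, tested against a Lagrange basis polynomial, would
give a short vanishing sum of `y`s, impossible for large `p`. A nontrivial character turns the sum
over the steps into a sum over `x` of Fourier coefficients of `{1, …, L}` at values of a nonconstant
polynomial of degree at most `ℓ`; each value is taken at most `ℓ` times, so Cauchy–Schwarz and
Parseval give a saving of order `√(ℓ / L)`, independent of `p`.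
-/

open Finset Function

section Colouring

/-- Pulling an oriented graph back along a map of vertex sets; used to move a graph to a vertex set
of the form `Fin m`. -/
def OrientedGraph.comap {U V : Type} (D : OrientedGraph V) (e : U → V) : OrientedGraph U where
  Adj u v := D.Adj (e u) (e v)
  irrefl u := D.irrefl (e u)
  asymm u v := D.asymm (e u) (e v)

/-- The direct (categorical) product of an oriented graph with an arbitrary digraph, the latter
being given by its adjacency relation `r`. -/
def OrientedGraph.tensor {V X : Type} (D : OrientedGraph V) (r : X → X → Prop) :
    OrientedGraph (V × X) where
  Adj p q := D.Adj p.1 q.1 ∧ r p.2 q.2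
  irrefl p h := D.irrefl p.1 h.1
  asymm p q h h' := D.asymm p.1 q.1 h.1 h'.1

/-- The digraph `r` has no closed walk of positive length less than `ℓ`. -/
def NoShortClosedWalk {X : Type*} (ℓ : ℕ) (r : X → X → Prop) : Prop :=
  ∀ m, 0 < m → m < ℓ → ¬ ∃ c : ZMod m → X, ∀ i, r (c i) (c (i + 1))

/-- Any two vertex sets of density at least `δ` are joined by an arc of `r`, in both directions. -/
def IsMixing {X : Type*} [Fintype X] (δ : ℝ) (r : X → X → Prop) : Prop :=
  ∀ A B : Finset X, δ * Fintype.card X ≤ #A → δ * Fintype.card X ≤ #B → ∃ x ∈ A, ∃ y ∈ B, r x y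

/-- A trap is a set `B` of vertices each of which has all its out-neighbours or all its
in-neighbours in `B`. The vertices at which a colouring of a product disagrees with a colouring of
the first factor form a trap. -/
def IsTrap {X : Type*} (r : X → X → Prop) (B : Finset X) : Prop :=
  ∀ x ∈ B, (∀ y, r x y → y ∈ B) ∨ (∀ y, r y x → y ∈ B)

/-- No nonempty set containing at most half of the vertices is a trap. -/
def NoSmallTrap {X : Type*} [Fintype X] (r : X → X → Prop) : Prop :=
  ∀ B : Finset X, 2 * #B ≤ Fintype.card X → IsTrap r B → B = ∅

lemma IsHom.comp {U V W : Type} {E : OrientedGraph U} {D : OrientedGraph V} {C : OrientedGraph W}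
    {g : V → W} {f : U → V} (hg : IsHom D C g) (hf : IsHom E D f) : IsHom E C (g ∘ f) :=
  fun _ _ h => hg (hf h)

lemma isHom_comap {U V : Type} (D : OrientedGraph V) (e : U → V) : IsHom (D.comap e) D e :=
  fun _ _ h => h

lemma isHom_symm_comap {U V : Type} (D : OrientedGraph V) (e : U ≃ V) :
    IsHom D (D.comap e) e.symm := by
  intro x y h
  simpa only [OrientedGraph.comap, Equiv.apply_symm_apply] using h

lemma isHom_fst_tensor {V X : Type} (D : OrientedGraph V) (r : X → X → Prop) :
    IsHom (D.tensor r) D Prod.fst :=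
  fun _ _ h => h.1

lemma NoShortClosedWalk.girthAtLeast {U X : Type} {ℓ : ℕ} {r : X → X → Prop}
    (hr : NoShortClosedWalk ℓ r) {E : OrientedGraph U} (ρ : U → X)
    (hρ : ∀ u v, E.Adj u v → r (ρ u) (ρ v)) : GirthAtLeast E ℓ :=
  fun m hm hmℓ ⟨c, _, hc⟩ => hr m hm hmℓ ⟨ρ ∘ c, fun i => hρ _ _ (hc i)⟩

variable {V W X : Type} {D : OrientedGraph V} {C : OrientedGraph W} {f : V → W}

lemma IsHom.update [DecidableEq V] (hf : IsHom D C f) {v : V} {c : W}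
    (hin : ∀ u, D.Adj u v → C.Adj (f u) c) (hout : ∀ u, D.Adj v u → C.Adj c (f u)) :
    IsHom D C (Function.update f v c) := by
  intro a b hab
  by_cases ha : a = v
  · subst ha
    have hb : b ≠ a := fun h => D.irrefl a (h ▸ hab)
    simpa only [update_self, update_of_ne hb] using hout b hab
  · by_cases hb : b = v
    · subst hb
      simpa only [update_self, update_of_ne ha] using hin a hab
    · simpa only [update_of_ne ha, update_of_ne hb] using hf hab

lemma IsPointedOf.eq_of_forall_adj (hC : IsPointedOf C D) (hf : IsHom D C f) {v : V} {c : W}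
    (hin : ∀ u, D.Adj u v → C.Adj (f u) c) (hout : ∀ u, D.Adj v u → C.Adj c (f u)) :
    c = f v := by
  classical
  by_contra hne
  refine hC ⟨f, update f v c, hf, hf.update hin hout, fun h => hne ?_, v,
    fun u hu => (update_of_ne hu c f).symm⟩
  rw [h, update_self]

variable [Fintype X]

open scoped Classical in
/-- The vertices `x` of the second factor whose copy of the first factor is coloured by `f`. -/
noncomputable def agreementSet (φ : V × X → W) (f : V → W) : Finset X :=
  {x | ∀ v, φ (v, x) = f v}

lemma mem_agreementSet {φ : V × X → W} {x : X} :
    x ∈ agreementSet φ f ↔ ∀ v, φ (v, x) = f v := by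
  simp only [agreementSet, mem_filter_univ]

lemma exists_le_card_agreementSet [Fintype V] [Fintype W] [Nonempty X] (φ : V × X → W) {δ : ℝ}
    (hδ : (Fintype.card W : ℝ) ^ Fintype.card V * δ ≤ 1) :
    ∃ f : V → W, δ * Fintype.card X ≤ #(agreementSet φ f) := by
  classical
  let F : X → V → W := fun x v => φ (v, x)
  have : Nonempty (V → W) := ⟨F (Classical.arbitrary X)⟩
  have hcard : Fintype.card (V → W) • (δ * Fintype.card X) ≤ Fintype.card X := by
    rw [nsmul_eq_mul, Fintype.card_fun, Nat.cast_pow, ← mul_assoc]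
    exact mul_le_of_le_one_left (Nat.cast_nonneg _) hδ
  obtain ⟨f, hf⟩ := Fintype.exists_le_card_fiber_of_nsmul_le_card F hcard
  have hset : agreementSet φ f = ({x | F x = f} : Finset X) := by
    ext x
    simp only [mem_agreementSet, mem_filter_univ, F, funext_iff]
  exact ⟨f, hset ▸ hf⟩

variable {r : X → X → Prop} {φ : V × X → W} {δ : ℝ}

lemma isHom_of_le_card_agreementSet (hr : IsMixing δ r) (hφ : IsHom (D.tensor r) C φ)
    (hf : δ * Fintype.card X ≤ #(agreementSet φ f)) : IsHom D C f := by
  intro u v huv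
  obtain ⟨x, hx, y, hy, hxy⟩ := hr _ _ hf hf
  rw [← mem_agreementSet.1 hx u, ← mem_agreementSet.1 hy v]
  exact hφ ⟨huv, hxy⟩

lemma card_filter_lt_of_ne [DecidableEq W] (hr : IsMixing δ r) (hφ : IsHom (D.tensor r) C φ)
    (hf : δ * Fintype.card X ≤ #(agreementSet φ f)) (hC : IsPointedOf C D) {v : V} {c : W}
    (hc : c ≠ f v) : (#{x | φ (v, x) = c} : ℝ) < δ * Fintype.card X := by
  by_contra! hlarge
  refine hc (hC.eq_of_forall_adj (isHom_of_le_card_agreementSet hr hφ hf)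
    (fun u huv => ?_) (fun u hvu => ?_))
  · obtain ⟨x, hx, y, hy, hxy⟩ := hr _ _ hf hlarge
    rw [← mem_agreementSet.1 hx u, ← (mem_filter_univ y).1 hy]
    exact hφ ⟨huv, hxy⟩
  · obtain ⟨x, hx, y, hy, hxy⟩ := hr _ _ hlarge hf
    rw [← mem_agreementSet.1 hy u, ← (mem_filter_univ x).1 hx]
    exact hφ ⟨hvu, hxy⟩

lemma card_compl_agreementSet_le [DecidableEq X] [Fintype V] [Fintype W] (hr : IsMixing δ r)
    (hφ : IsHom (D.tensor r) C φ) (hf : δ * Fintype.card X ≤ #(agreementSet φ f))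
    (hC : IsPointedOf C D) (hδ : 0 ≤ δ) :
    (#(agreementSet φ f)ᶜ : ℝ) ≤ Fintype.card V * Fintype.card W * (δ * Fintype.card X) := by
  classical
  let bad : Finset (V × W) := {q | q.2 ≠ f q.1}
  have hcover : (agreementSet φ f)ᶜ ⊆ bad.biUnion fun q => {x | φ (q.1, x) = q.2} := by
    intro x hx
    obtain ⟨v, hv⟩ := not_forall.1 (mem_agreementSet.not.1 (mem_compl.1 hx))
    exact mem_biUnion.2 ⟨(v, φ (v, x)), (mem_filter_univ _).2 hv, (mem_filter_univ _).2 rfl⟩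
  calc (#(agreementSet φ f)ᶜ : ℝ)
      ≤ ∑ q ∈ bad, (#{x | φ (q.1, x) = q.2} : ℝ) := by
        exact_mod_cast (card_le_card hcover).trans card_biUnion_le
    _ ≤ #bad • (δ * Fintype.card X) := sum_le_card_nsmul _ _ _ fun q hq =>
        (card_filter_lt_of_ne hr hφ hf hC ((mem_filter_univ q).1 hq)).le
    _ ≤ Fintype.card V * Fintype.card W * (δ * Fintype.card X) := by
        rw [nsmul_eq_mul]
        gcongr
        exact_mod_cast (card_le_univ bad).trans_eq (Fintype.card_prod V W)

lemma isTrap_compl_agreementSet [DecidableEq X] (hφ : IsHom (D.tensor r) C φ) (hf : IsHom D C f)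
    (hC : IsPointedOf C D) : IsTrap r (agreementSet φ f)ᶜ := by
  intro x hx
  by_contra! hout
  obtain ⟨⟨y, hxy, hy⟩, z, hzx, hz⟩ := hout
  rw [mem_compl, not_not, mem_agreementSet] at hy hz
  refine mem_compl.1 hx (mem_agreementSet.2 fun v =>
    hC.eq_of_forall_adj hf (fun u huv => ?_) (fun u hvu => ?_))
  · rw [← hz u]
    exact hφ ⟨huv, hzx⟩
  · rw [← hy u]
    exact hφ ⟨hvu, hxy⟩

theorem exists_isHom_of_isHom_tensor [Fintype V] [Fintype W] [Nonempty X] (hmix : IsMixing δ r)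
    (htrap : NoSmallTrap r) (hδ : 0 ≤ δ) (hcol : (Fintype.card W : ℝ) ^ Fintype.card V * δ ≤ 1)
    (hdis : Fintype.card V * Fintype.card W * δ ≤ 1 / 2) (hφ : IsHom (D.tensor r) C φ) :
    ∃ f : V → W, IsHom D C f ∧ (IsPointedOf C D → φ = f ∘ Prod.fst) := by
  classical
  obtain ⟨f, hf⟩ := exists_le_card_agreementSet φ hcol
  have hom := isHom_of_le_card_agreementSet hmix hφ hf
  refine ⟨f, hom, fun hC => ?_⟩
  have hsmall : 2 * #(agreementSet φ f)ᶜ ≤ Fintype.card X := by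
    have hcard := card_compl_agreementSet_le hmix hφ hf hC hδ
    rw [← mul_assoc] at hcard
    have hhalf := mul_le_mul_of_nonneg_right hdis (Nat.cast_nonneg (Fintype.card X))
    exact_mod_cast (by linarith : (2 : ℝ) * #(agreementSet φ f)ᶜ ≤ Fintype.card X)
  have hempty := htrap _ hsmall (isTrap_compl_agreementSet hφ hom hC)
  rw [compl_eq_empty_iff] at hempty
  exact funext fun q => mem_agreementSet.1 (hempty ▸ mem_univ q.2) q.1

end Colouring

section Translations

variable {G : Type*} [AddCommGroup G]

/-- The Fourier coefficient at `χ` of the indicator function of `A`. -/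
def charSum (A : Finset G) (χ : AddChar G ℂ) : ℂ := ∑ x ∈ A, χ x

section Fourier

variable [Fintype G]

lemma sum_norm_sq_charSum (A : Finset G) :
    ∑ χ, ‖charSum A χ‖ ^ 2 = (Fintype.card G : ℝ) * #A := by
  classical
  have hsq (χ : AddChar G ℂ) : (‖charSum A χ‖ ^ 2 : ℂ) = ∑ x ∈ A, ∑ y ∈ A, χ (x - y) := by
    rw [← Complex.mul_conj', charSum, map_sum, sum_mul_sum]
    simp only [sub_eq_add_neg, AddChar.map_add_eq_mul, AddChar.map_neg_eq_conj]
  have hsum : ∑ χ, (‖charSum A χ‖ ^ 2 : ℂ) = Fintype.card G * #A := by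
    calc ∑ χ, (‖charSum A χ‖ ^ 2 : ℂ)
        = ∑ x ∈ A, ∑ y ∈ A, ∑ χ : AddChar G ℂ, χ (x - y) := by
          simp_rw [hsq]
          rw [sum_comm]
          exact sum_congr rfl fun _ _ => sum_comm
      _ = ∑ _ ∈ A, (Fintype.card G : ℂ) := by
          refine sum_congr rfl fun x hx => ?_
          simp only [AddChar.sum_apply_eq_ite, sub_eq_zero]
          rw [sum_ite_eq, if_pos hx]
      _ = Fintype.card G * #A := by rw [sum_const, nsmul_eq_mul, mul_comm]
  exact_mod_cast hsum

lemma sum_norm_charSum_mul_le (A B : Finset G) :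
    ∑ χ, ‖charSum A χ‖ * ‖charSum B χ‖ ≤ Fintype.card G * √(#A * #B) := by
  calc ∑ χ, ‖charSum A χ‖ * ‖charSum B χ‖
      ≤ √(∑ χ, ‖charSum A χ‖ ^ 2) * √(∑ χ, ‖charSum B χ‖ ^ 2) := Real.sum_mul_le_sqrt_mul_sqrt ..
    _ = √((Fintype.card G : ℝ) ^ 2 * (#A * #B)) := by
        rw [sum_norm_sq_charSum, sum_norm_sq_charSum, ← Real.sqrt_mul (by positivity)]
        ring_nf
    _ = Fintype.card G * √(#A * #B) := by
        rw [Real.sqrt_mul (by positivity), Real.sqrt_sq (by positivity)]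

end Fourier

variable {T : Type*} [Fintype T]

/-- The family `g` is `ε`-biased: its normalised sum against every nontrivial character has modulus
at most `ε`. -/
def IsBiased (ε : ℝ) (g : T → G) : Prop :=
  ∀ χ : AddChar G ℂ, χ ≠ 0 → ‖∑ t, χ (g t)‖ ≤ ε * Fintype.card T

lemma IsBiased.neg {ε : ℝ} {g : T → G} (hg : IsBiased ε g) : IsBiased ε (-g) :=
  fun χ hχ => hg (-χ) (neg_ne_zero.2 hχ)

/-- The number of pairs `(t, x)` for which translation by `g t` takes `x ∈ A` into `B`. -/
def translateCount [DecidableEq G] (g : T → G) (A B : Finset G) : ℕ :=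
  ∑ t, #{x ∈ A | x + g t ∈ B}

lemma translateCount_of_forall_add_mem [DecidableEq G] {g : T → G} {A B : Finset G}
    (h : ∀ x ∈ A, ∀ t, x + g t ∈ B) : translateCount g A B = Fintype.card T * #A := by
  have hfilter (t : T) : {x ∈ A | x + g t ∈ B} = A := filter_true_of_mem fun x hx => h x hx t
  simp only [translateCount, hfilter, sum_const, card_univ, smul_eq_mul]

lemma translateCount_eq_zero [DecidableEq G] {g : T → G} {A B : Finset G}
    (h : ∀ x ∈ A, ∀ t, x + g t ∉ B) : translateCount g A B = 0 :=
  sum_eq_zero fun t _ => card_eq_zero.2 (filter_eq_empty_iff.2 fun x hx => h x hx t)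

variable [Fintype G]

lemma sum_mul_charSum_mul_conj_charSum [DecidableEq G] (g : T → G) (A B : Finset G) :
    ∑ χ : AddChar G ℂ, (∑ t, χ (g t)) * charSum A χ * starRingEnd ℂ (charSum B χ) =
      Fintype.card G * translateCount g A B := by
  have hexpand (χ : AddChar G ℂ) :
      (∑ t, χ (g t)) * charSum A χ * starRingEnd ℂ (charSum B χ) =
        ∑ t, ∑ x ∈ A, ∑ y ∈ B, χ (x + g t - y) := by
    rw [charSum, charSum, map_sum, mul_assoc, sum_mul_sum, sum_mul]
    refine sum_congr rfl fun t _ => ?_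
    rw [mul_sum]
    refine sum_congr rfl fun x _ => ?_
    rw [mul_sum]
    refine sum_congr rfl fun y _ => ?_
    rw [← AddChar.map_neg_eq_conj, ← AddChar.map_add_eq_mul, ← AddChar.map_add_eq_mul]
    abel_nf
  have hcount (t : T) : ∑ x ∈ A, ∑ y ∈ B, ∑ χ : AddChar G ℂ, χ (x + g t - y) =
      Fintype.card G * #{x ∈ A | x + g t ∈ B} := by
    simp only [AddChar.sum_apply_eq_ite, sub_eq_zero, sum_ite_eq]
    rw [← sum_filter, sum_const, nsmul_eq_mul, mul_comm]
  calc ∑ χ : AddChar G ℂ, (∑ t, χ (g t)) * charSum A χ * starRingEnd ℂ (charSum B χ)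
      = ∑ t, ∑ x ∈ A, ∑ y ∈ B, ∑ χ : AddChar G ℂ, χ (x + g t - y) := by
        simp_rw [hexpand]
        rw [sum_comm]
        refine sum_congr rfl fun t _ => ?_
        rw [sum_comm]
        exact sum_congr rfl fun _ _ => sum_comm
    _ = Fintype.card G * translateCount g A B := by
        rw [sum_congr rfl fun t _ => hcount t, ← mul_sum, translateCount, Nat.cast_sum]

variable {ε : ℝ} {g : T → G}

/- The expander mixing lemma: the trivial character contributes the main term. -/
lemma IsBiased.abs_translateCount_sub_le [DecidableEq G] (hg : IsBiased ε g) (hε : 0 ≤ ε)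
    (A B : Finset G) :
    |(Fintype.card G : ℝ) * translateCount g A B - Fintype.card T * #A * #B| ≤
      ε * Fintype.card T * (Fintype.card G * √(#A * #B)) := by
  classical
  let term (χ : AddChar G ℂ) : ℂ := (∑ t, χ (g t)) * charSum A χ * starRingEnd ℂ (charSum B χ)
  have hmain : term 0 = Fintype.card T * #A * #B := by simp [term, charSum]
  have herror : (Fintype.card G * translateCount g A B - Fintype.card T * #A * #B : ℂ) =
      ∑ χ ∈ univ.erase 0, term χ := by
    rw [← sum_mul_charSum_mul_conj_charSum, ← hmain, ← add_sum_erase _ _ (mem_univ 0),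
      add_sub_cancel_left]
  have hterm : ∀ χ ∈ univ.erase 0,
      ‖term χ‖ ≤ ε * Fintype.card T * (‖charSum A χ‖ * ‖charSum B χ‖) := by
    intro χ hχ
    simp only [term, norm_mul, RCLike.norm_conj, mul_assoc (‖∑ t, χ (g t)‖)]
    gcongr
    exact hg χ (ne_of_mem_erase hχ)
  calc |(Fintype.card G : ℝ) * translateCount g A B - Fintype.card T * #A * #B|
      = ‖∑ χ ∈ univ.erase 0, term χ‖ := by
        rw [← herror, ← Real.norm_eq_abs, ← Complex.norm_real]
        push_cast
        rfl
    _ ≤ ∑ χ ∈ univ.erase 0, ε * Fintype.card T * (‖charSum A χ‖ * ‖charSum B χ‖) :=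
        norm_sum_le_of_le _ hterm
    _ ≤ ∑ χ, ε * Fintype.card T * (‖charSum A χ‖ * ‖charSum B χ‖) :=
        sum_le_sum_of_subset_of_nonneg (erase_subset _ _) fun _ _ _ => by positivity
    _ ≤ ε * Fintype.card T * (Fintype.card G * √(#A * #B)) := by
        rw [← mul_sum]
        gcongr
        exact sum_norm_charSum_mul_le A B

variable [Nonempty T]

lemma IsBiased.isMixing (hg : IsBiased ε g) (hε : 0 ≤ ε) {δ : ℝ} (hδ : ε < δ) :
    IsMixing δ fun x y => ∃ t, y = x + g t := by
  classical
  intro A B hA hB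
  by_contra! hnone
  have hzero : translateCount g A B = 0 :=
    translateCount_eq_zero fun x hx t hxt => hnone x hx _ hxt t rfl
  have hmix := hg.abs_translateCount_sub_le hε A B
  have hG : (0 : ℝ) < Fintype.card G := Nat.cast_pos.2 Fintype.card_pos
  have hT : (0 : ℝ) < Fintype.card T := Nat.cast_pos.2 Fintype.card_pos
  set s : ℝ := √(#A * #B) with hs
  have hsq : s ^ 2 = #A * #B := Real.sq_sqrt (by positivity)
  have hδ0 : 0 ≤ δ := hε.trans hδ.le
  have hδs : δ * Fintype.card G ≤ s := by
    refine Real.le_sqrt_of_sq_le ?_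
    rw [sq]
    gcongr
  rw [hzero, Nat.cast_zero, mul_zero, zero_sub, abs_neg, abs_of_nonneg (by positivity),
    mul_assoc, ← hsq] at hmix
  have hεs : ε * Fintype.card G < s := (mul_lt_mul_of_pos_right hδ hG).trans_le hδs
  have hs0 : 0 < s := (by positivity : 0 ≤ ε * (Fintype.card G : ℝ)).trans_lt hεs
  have := mul_lt_mul_of_pos_left hεs (mul_pos hT hs0)
  nlinarith

lemma IsBiased.card_le_of_forall_add_mem (hg : IsBiased ε g) (hε : 0 ≤ ε) {A B : Finset G}
    (hB : 2 * #B ≤ Fintype.card G) (hAB : ∀ x ∈ A, ∀ t, x + g t ∈ B) :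
    (#A : ℝ) ≤ 4 * ε ^ 2 * #B := by
  classical
  rcases A.eq_empty_or_nonempty with rfl | hA
  · rw [card_empty, Nat.cast_zero]
    positivity
  have hmix := (le_abs_self _).trans (hg.abs_translateCount_sub_le hε A B)
  rw [translateCount_of_forall_add_mem hAB, Nat.cast_mul] at hmix
  have hA0 : (0 : ℝ) < #A := Nat.cast_pos.2 hA.card_pos
  have hG : (0 : ℝ) < Fintype.card G := Nat.cast_pos.2 Fintype.card_pos
  have hT : (0 : ℝ) < Fintype.card T := Nat.cast_pos.2 Fintype.card_pos
  have hB' : (2 * #B : ℝ) ≤ Fintype.card G := by exact_mod_cast hB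
  have hle : (#A : ℝ) ≤ 2 * ε * √(#A * #B) := by
    have hhalf : (Fintype.card T * Fintype.card G : ℝ) * #A ≤
        (Fintype.card T * Fintype.card G : ℝ) * (2 * ε * √(#A * #B)) := by
      nlinarith [mul_le_mul_of_nonneg_left hB' (mul_pos hT hA0).le]
    exact le_of_mul_le_mul_left hhalf (mul_pos hT hG)
  have hsq : (#A : ℝ) ^ 2 ≤ (2 * ε * √(#A * #B)) ^ 2 := by gcongr
  rw [mul_pow, Real.sq_sqrt (by positivity)] at hsq
  refine le_of_mul_le_mul_left ?_ hA0
  linarith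

lemma IsBiased.noSmallTrap (hg : IsBiased ε g) (hε : 0 ≤ ε) (hε' : ε ≤ 1 / 4) :
    NoSmallTrap fun x y => ∃ t, y = x + g t := by
  classical
  intro B hB htrap
  set B₁ : Finset G := {x ∈ B | ∀ t, x + g t ∈ B}
  set B₂ : Finset G := {x ∈ B | ∀ t, x + (-g) t ∈ B}
  have hcover : B ⊆ B₁ ∪ B₂ := by
    intro x hx
    rcases htrap x hx with hout | hin
    · exact mem_union_left _ (mem_filter.2 ⟨hx, fun t => hout _ ⟨t, rfl⟩⟩)
    · exact mem_union_right _
        (mem_filter.2 ⟨hx, fun t => hin _ ⟨t, (neg_add_cancel_right x (g t)).symm⟩⟩)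
  have hcard : (#B : ℝ) ≤ #B₁ + #B₂ := by
    exact_mod_cast (card_le_card hcover).trans (card_union_le _ _)
  have h₁ := hg.card_le_of_forall_add_mem hε hB fun x hx => (mem_filter.1 hx : x ∈ B ∧ _).2
  have h₂ := hg.neg.card_le_of_forall_add_mem hε hB fun x hx => (mem_filter.1 hx : x ∈ B ∧ _).2
  have hε2 : ε ^ 2 ≤ 1 / 16 := by nlinarith
  have hB0 : (#B : ℝ) ≤ 0 := by nlinarith [mul_le_mul_of_nonneg_right hε2 (Nat.cast_nonneg #B)]
  exact card_eq_zero.1 (Nat.le_zero.1 (by exact_mod_cast hB0))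

end Translations

section ZeroSums

variable {G T : Type*} [AddCommGroup G] {ℓ : ℕ}

/-- No sum of fewer than `ℓ` (and at least one) terms of the family `g`, repetitions allowed,
vanishes. -/
def NoShortZeroSum (ℓ : ℕ) (g : T → G) : Prop :=
  ∀ (ι : Type) (s : Finset ι) (t : ι → T), s.Nonempty → #s < ℓ → ∑ i ∈ s, g (t i) ≠ 0

lemma NoShortZeroSum.noShortClosedWalk {g : T → G} (hg : NoShortZeroSum ℓ g) :
    NoShortClosedWalk ℓ fun x y => ∃ t, y = x + g t := by
  rintro m hm hmℓ ⟨c, hc⟩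
  have : NeZero m := ⟨hm.ne'⟩
  choose t ht using hc
  have htelescope (i : ZMod m) : g (t i) = c (i + 1) - c i := by rw [ht, add_sub_cancel_left]
  refine hg _ univ t univ_nonempty (by rwa [card_univ, ZMod.card]) ?_
  rw [sum_congr rfl fun i _ => htelescope i, sum_sub_distrib, sub_eq_zero]
  exact Equiv.sum_comp (Equiv.addRight 1) c

lemma exists_noShortZeroSum_subtype_val {ℓ L p : ℕ} (hL : L < p) (hℓ : ℓ * L < p) :
    ∃ Y : Finset (ZMod p), #Y = L ∧ NoShortZeroSum ℓ (Subtype.val : Y → ZMod p) := by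
  have hinj : Set.InjOn (Nat.cast : ℕ → ZMod p) (Icc 1 L) :=
    (CharP.natCast_injOn_Iio (ZMod p) p).mono fun n hn => (mem_Icc.1 hn).2.trans_lt hL
  refine ⟨(Icc 1 L).image Nat.cast, ?_, ?_⟩
  · rw [card_image_of_injOn hinj, Nat.card_Icc, Nat.add_sub_cancel]
  intro ι s t hs hsℓ hzero
  have hrep (y : (Icc 1 L).image (Nat.cast : ℕ → ZMod p)) :
      ∃ n : ℕ, 1 ≤ n ∧ n ≤ L ∧ (n : ZMod p) = y := by
    simpa only [mem_image, mem_Icc, and_assoc] using y.2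
  choose n hn1 hnL hn using hrep
  have hdvd : p ∣ ∑ i ∈ s, n (t i) := by
    rw [← ZMod.natCast_eq_zero_iff, Nat.cast_sum, ← hzero]
    exact sum_congr rfl fun i _ => hn (t i)
  have hpos : 0 < ∑ i ∈ s, n (t i) := sum_pos (fun i _ => hn1 (t i)) hs
  have hlt : ∑ i ∈ s, n (t i) < p := by
    calc ∑ i ∈ s, n (t i) ≤ #s * L := sum_le_card_nsmul _ _ _ fun i _ => hnL (t i)
      _ ≤ ℓ * L := by gcongr
      _ < p := hℓ
  exact Nat.not_dvd_of_pos_of_lt hpos hlt hdvd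

end ZeroSums

section PrimitiveCharacters

variable {R : Type*} [CommRing R]

lemma addChar_map_sum_eq_prod {A M ι : Type*} [AddCommMonoid A] [CommMonoid M] (χ : AddChar A M)
    (s : Finset ι) (f : ι → A) : χ (∑ i ∈ s, f i) = ∏ i ∈ s, χ (f i) :=
  map_prod χ.toMonoidHom (fun i => Multiplicative.ofAdd (f i)) s

lemma bijective_mulShift [Finite R] {ψ : AddChar R ℂ} (hψ : ψ.IsPrimitive) :
    Bijective ψ.mulShift := by
  cases nonempty_fintype R
  exact (Fintype.bijective_iff_injective_and_card _).2
    ⟨AddChar.to_mulShift_inj_of_isPrimitive hψ, AddChar.card_eq.symm⟩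

lemma exists_forall_apply_eq_dotProduct [Finite R] {ι : Type*} [Fintype ι] {ψ : AddChar R ℂ}
    (hψ : ψ.IsPrimitive) (χ : AddChar (ι → R) ℂ) : ∃ c : ι → R, ∀ v, χ v = ψ (c ⬝ᵥ v) := by
  classical
  choose c hc using fun i => (bijective_mulShift hψ).surjective
    (χ.compAddMonoidHom (AddMonoidHom.single (fun _ => R) i))
  have happly (i : ι) (a : R) : χ (Pi.single i a) = ψ (c i * a) :=
    (DFunLike.congr_fun (hc i) a).symm
  refine ⟨c, fun v => ?_⟩
  calc χ v = χ (∑ i, Pi.single i (v i)) := by rw [univ_sum_single]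
    _ = ∏ i, χ (Pi.single i (v i)) := addChar_map_sum_eq_prod χ _ _
    _ = ∏ i, ψ (c i * v i) := prod_congr rfl fun i _ => happly i (v i)
    _ = ψ (c ⬝ᵥ v) := (addChar_map_sum_eq_prod ψ _ _).symm

lemma sum_norm_sq_charSum_mulShift [Fintype R] {ψ : AddChar R ℂ} (hψ : ψ.IsPrimitive)
    (Y : Finset R) :
    ∑ a, ‖charSum Y (ψ.mulShift a)‖ ^ 2 = (Fintype.card R : ℝ) * #Y := by
  rw [← sum_norm_sq_charSum]
  exact (bijective_mulShift hψ).sum_comp fun χ => ‖charSum Y χ‖ ^ 2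

end PrimitiveCharacters

section MomentCurve

open Polynomial

variable {K : Type*} [Field K] {d : ℕ} {Y : Finset K}

/-- The nonzero points of the moment curve `x ↦ (x, x², …, x ^ d)`, scaled by elements of `Y`. -/
def scaledMomentCurve (d : ℕ) (Y : Finset K) (t : Kˣ × Y) : Fin d → K :=
  fun i => t.2 * (t.1 : K) ^ (i + 1 : ℕ)

lemma coeff_dotProduct_scaledMomentCurve {Q : K[X]} (hQ : Q.natDegree < d) (t : Kˣ × Y) :
    (fun i : Fin d => Q.coeff i) ⬝ᵥ scaledMomentCurve d Y t = t.2 * (X * Q).eval (t.1 : K) := by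
  rw [eval_mul, eval_X, eval_eq_sum_range' hQ, ← Fin.sum_univ_eq_sum_range
    (fun i => Q.coeff i * (t.1 : K) ^ i), mul_sum, mul_sum]
  refine sum_congr rfl fun i _ => ?_
  rw [scaledMomentCurve]
  ring

lemma sum_mul_eval_eq_zero {ι : Type*} {s : Finset ι} {t : ι → Kˣ × Y}
    (ht : ∑ i ∈ s, scaledMomentCurve d Y (t i) = 0) {Q : K[X]} (hQ : Q.natDegree < d) :
    ∑ i ∈ s, ((t i).2 : K) * (X * Q).eval ((t i).1 : K) = 0 := by
  simp_rw [← coeff_dotProduct_scaledMomentCurve hQ]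
  rw [← dotProduct_sum, ht, dotProduct_zero]

/- Pairing the sum with the Lagrange basis polynomial at one of the nodes isolates the terms lying
over that node. -/
lemma noShortZeroSum_scaledMomentCurve (hY : NoShortZeroSum d (Subtype.val : Y → K)) :
    NoShortZeroSum d (scaledMomentCurve d Y) := by
  classical
  intro ι s t ⟨j, hj⟩ hs hzero
  let node (i : ι) : K := (t i).1
  let nodes := s.image node
  set Q := Lagrange.basis nodes id (node j) with hQdef
  have hQ : Q.natDegree < d := by
    rw [hQdef, Lagrange.natDegree_basis (Set.injOn_id _) (mem_image_of_mem _ hj)]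
    have := card_image_le (s := s) (f := node)
    omega
  have hQeval : ∀ i ∈ s, Q.eval (node i) = if node i = node j then 1 else 0 := by
    intro i hi
    split_ifs with h
    · rw [h]
      exact Lagrange.eval_basis_self (Set.injOn_id _) (mem_image_of_mem _ hj)
    · exact Lagrange.eval_basis_of_ne (v := id) (Ne.symm h) (mem_image_of_mem _ hi)
  have hsum : ∑ i ∈ s with node i = node j, ((t i).2 : K) * node j = 0 := by
    rw [sum_filter]
    refine (sum_congr rfl fun i hi => ?_).trans (sum_mul_eval_eq_zero hzero hQ)
    rw [eval_mul, eval_X, hQeval i hi]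
    split_ifs with h
    · rw [mul_one, ← h]
    · rw [mul_zero, mul_zero]
  rw [← sum_mul, mul_eq_zero, or_iff_left (t j).1.ne_zero] at hsum
  exact hY _ {i ∈ s | node i = node j} (fun i => (t i).2) ⟨j, mem_filter.2 ⟨hj, rfl⟩⟩
    ((card_filter_le _ _).trans_lt hs) hsum

lemma exists_polynomial_forall_apply_eq_dotProduct [Finite K] {ψ : AddChar K ℂ}
    (hψ : ψ.IsPrimitive) {χ : AddChar (Fin d → K) ℂ} (hχ : χ ≠ 0) :
    ∃ Q : K[X], Q ≠ 0 ∧ Q.natDegree < d ∧ ∀ v, χ v = ψ ((fun i : Fin d => Q.coeff i) ⬝ᵥ v) := by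
  classical
  obtain ⟨c, hc⟩ := exists_forall_apply_eq_dotProduct hψ χ
  have hcoeff : (fun i : Fin d => (ofFn d c).coeff i) = c :=
    funext fun i => ofFn_coeff_eq_val_of_lt c i.2
  have hne : ofFn d c ≠ 0 := by
    intro h
    have hc0 : c = 0 := injective_ofFn d (h.trans (ofFn_zero d).symm)
    refine hχ (DFunLike.ext _ _ fun v => ?_)
    rw [hc, hc0, zero_dotProduct, AddChar.map_zero_eq_one, AddChar.zero_apply]
  exact ⟨ofFn d c, hne, (natDegree_lt_iff_degree_lt hne).2 (ofFn_degree_lt c), by rwa [hcoeff]⟩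

variable [Fintype K] [DecidableEq K]

lemma card_filter_eval_eq_le {F : K[X]} (hF : 0 < F.natDegree) (a : K) :
    #{x : Kˣ | F.eval (x : K) = a} ≤ F.natDegree := by
  have hne : F - C a ≠ 0 := ne_zero_of_natDegree_gt (natDegree_sub_C (a := a) ▸ hF)
  calc #{x : Kˣ | F.eval (x : K) = a}
      ≤ #(F - C a).roots.toFinset := by
        refine card_le_card_of_injOn Units.val (fun x hx => ?_) Units.val_injective.injOn
        rw [mem_coe, Multiset.mem_toFinset, mem_roots hne, IsRoot, eval_sub, eval_C, sub_eq_zero]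
        exact (mem_filter_univ x).1 hx
    _ ≤ (F - C a).roots.card := Multiset.toFinset_card_le _
    _ ≤ F.natDegree := natDegree_sub_C (a := a) ▸ card_roots' _

lemma sum_eval_le {F : K[X]} (hF : 0 < F.natDegree) {w : K → ℝ} (hw : ∀ a, 0 ≤ w a) :
    ∑ x : Kˣ, w (F.eval (x : K)) ≤ F.natDegree * ∑ a, w a := by
  calc ∑ x : Kˣ, w (F.eval (x : K))
      = ∑ a, #{x : Kˣ | F.eval (x : K) = a} • w a := by
        rw [← sum_fiberwise univ fun x : Kˣ => F.eval (x : K)]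
        refine sum_congr rfl fun a _ => sum_eq_card_nsmul fun x hx => ?_
        rw [(mem_filter_univ x).1 hx]
    _ ≤ ∑ a, F.natDegree * w a := by
        refine sum_le_sum fun a _ => ?_
        rw [nsmul_eq_mul]
        exact mul_le_mul_of_nonneg_right (Nat.cast_le.2 (card_filter_eval_eq_le hF a)) (hw a)
    _ = F.natDegree * ∑ a, w a := (mul_sum _ _ _).symm

lemma norm_sum_charSum_mulShift_eval_sq_le {ψ : AddChar K ℂ} (hψ : ψ.IsPrimitive) (Y : Finset K)
    {F : K[X]} (hF : 0 < F.natDegree) :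
    ‖∑ x : Kˣ, charSum Y (ψ.mulShift (F.eval (x : K)))‖ ^ 2 ≤
      Fintype.card Kˣ * (F.natDegree * (Fintype.card K * #Y)) := by
  calc ‖∑ x : Kˣ, charSum Y (ψ.mulShift (F.eval (x : K)))‖ ^ 2
      ≤ (∑ x : Kˣ, ‖charSum Y (ψ.mulShift (F.eval (x : K)))‖) ^ 2 := by
        gcongr
        exact norm_sum_le _ _
    _ ≤ Fintype.card Kˣ * ∑ x : Kˣ, ‖charSum Y (ψ.mulShift (F.eval (x : K)))‖ ^ 2 :=
        sq_sum_le_card_mul_sum_sq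
    _ ≤ Fintype.card Kˣ * (F.natDegree * (Fintype.card K * #Y)) := by
        rw [← sum_norm_sq_charSum_mulShift hψ]
        gcongr
        exact sum_eval_le hF (w := fun a => ‖charSum Y (ψ.mulShift a)‖ ^ 2) fun a => by positivity

lemma sum_apply_scaledMomentCurve {ψ : AddChar K ℂ} {χ : AddChar (Fin d → K) ℂ} {Q : K[X]}
    (hQ : Q.natDegree < d) (hχ : ∀ v, χ v = ψ ((fun i : Fin d => Q.coeff i) ⬝ᵥ v)) :
    ∑ t, χ (scaledMomentCurve d Y t) =
      ∑ x : Kˣ, charSum Y (ψ.mulShift ((X * Q).eval (x : K))) := by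
  rw [Fintype.sum_prod_type]
  refine sum_congr rfl fun x _ => ?_
  rw [charSum, ← sum_coe_sort Y]
  refine sum_congr rfl fun y _ => ?_
  rw [hχ, coeff_dotProduct_scaledMomentCurve hQ, AddChar.mulShift_apply, mul_comm]

lemma card_le_two_mul_card_units (K : Type*) [Field K] [Fintype K] [DecidableEq K] :
    (Fintype.card K : ℝ) ≤ 2 * Fintype.card Kˣ := by
  have hK : Fintype.card K = Fintype.card Kˣ + 1 := Fintype.card_eq_card_units_add_one K
  have hpos : 0 < Fintype.card Kˣ := Fintype.card_pos
  exact_mod_cast (by omega : Fintype.card K ≤ 2 * Fintype.card Kˣ)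

theorem isBiased_scaledMomentCurve {ε : ℝ} (hε : 0 ≤ ε) (hd : 2 * d ≤ ε ^ 2 * #Y) :
    IsBiased ε (scaledMomentCurve d Y) := by
  intro χ hχ
  obtain ⟨ψ, hψ1⟩ := AddChar.exists_apply_ne_zero.2 (one_ne_zero : (1 : K) ≠ 0)
  have hψ : ψ.IsPrimitive :=
    AddChar.IsPrimitive.of_ne_one fun h => hψ1 (by rw [h, AddChar.one_apply])
  obtain ⟨Q, hQ0, hQd, hQχ⟩ := exists_polynomial_forall_apply_eq_dotProduct hψ hχ
  have hdeg : (X * Q).natDegree = Q.natDegree + 1 := natDegree_X_mul hQ0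
  have hsum := norm_sum_charSum_mulShift_eval_sq_le hψ Y (F := X * Q) (by omega)
  rw [← sum_apply_scaledMomentCurve hQd hQχ] at hsum
  refine le_of_sq_le_sq ?_ (by positivity)
  calc ‖∑ t, χ (scaledMomentCurve d Y t)‖ ^ 2
      ≤ Fintype.card Kˣ * ((X * Q).natDegree * (Fintype.card K * #Y)) := hsum
    _ ≤ Fintype.card Kˣ * (d * (2 * Fintype.card Kˣ * #Y)) := by
        gcongr
        · omega
        · exact card_le_two_mul_card_units K
    _ = (Fintype.card Kˣ ^ 2 * #Y) * (2 * d) := by ring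
    _ ≤ (Fintype.card Kˣ ^ 2 * #Y) * (ε ^ 2 * #Y) := by gcongr
    _ = (ε * Fintype.card (Kˣ × Y)) ^ 2 := by
        rw [Fintype.card_prod, Fintype.card_coe]
        push_cast
        ring

end MomentCurve

theorem exists_sparse_mixing_digraph (ℓ : ℕ) {δ : ℝ} (hδ : 0 < δ) :
    ∃ (X : Type) (_ : Fintype X) (_ : Nonempty X) (r : X → X → Prop),
      NoShortClosedWalk ℓ r ∧ IsMixing δ r ∧ NoSmallTrap r := by
  let ε : ℝ := min (δ / 2) (1 / 4)
  have hε : 0 < ε := lt_min (half_pos hδ) (by norm_num)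
  obtain ⟨L, hL⟩ := exists_nat_gt (2 * ℓ / ε ^ 2)
  have hL0 : 0 < L := Nat.cast_pos.1 ((by positivity : (0 : ℝ) ≤ 2 * ℓ / ε ^ 2).trans_lt hL)
  obtain ⟨p, hp, hprime⟩ := Nat.exists_infinite_primes ((ℓ + 1) * L + 1)
  have : Fact p.Prime := ⟨hprime⟩
  have hLp : L < p := by nlinarith
  have hℓLp : ℓ * L < p := by nlinarith
  obtain ⟨Y, hYcard, hY⟩ := exists_noShortZeroSum_subtype_val hLp hℓLp
  have : Nonempty Y := (card_pos.1 (hYcard ▸ hL0)).to_subtype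
  have hbias : IsBiased ε (scaledMomentCurve ℓ Y) := by
    refine isBiased_scaledMomentCurve hε.le ?_
    rw [hYcard, ← div_le_iff₀' (by positivity)]
    exact hL.le
  exact ⟨Fin ℓ → ZMod p, inferInstance, inferInstance,
    fun x y => ∃ t, y = x + scaledMomentCurve ℓ Y t,
    (noShortZeroSum_scaledMomentCurve hY).noShortClosedWalk,
    hbias.isMixing hε.le ((min_le_left _ _).trans_lt (half_lt_self hδ)),
    hbias.noSmallTrap hε.le (min_le_right _ _)⟩

lemma exists_pos_pow_mul_le_one_and_mul_le_half (n k : ℕ) :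
    ∃ δ : ℝ, 0 < δ ∧ (∀ w ≤ k, (w : ℝ) ^ n * δ ≤ 1) ∧ ∀ w ≤ k, n * w * δ ≤ 1 / 2 := by
  refine ⟨1 / (2 * ((k : ℝ) ^ n + n * k + 1)), by positivity, fun w hw => ?_, fun w hw => ?_⟩
  · have hpow : (w : ℝ) ^ n ≤ (k : ℝ) ^ n := by gcongr
    rw [mul_one_div, div_le_one (by positivity)]
    nlinarith [(by positivity : (0 : ℝ) ≤ k ^ n + n * k)]
  · have hmul : (n * w : ℝ) ≤ n * k := by gcongr
    rw [mul_one_div, div_le_iff₀ (by positivity)]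
    nlinarith [(by positivity : (0 : ℝ) ≤ (k : ℝ) ^ n)]

/-- **Theorem 1 (main result).** For every finite oriented graph `D` and positive integers
`k`, `ℓ`, there is a finite oriented graph `D*` and a surjective homomorphism
`ψ : V(D*) → V(D)` such that (i) `D*` has girth at least `ℓ`; (ii) for every oriented
graph `C` on at most `k` vertices, `D*` is `C`-colourable iff `D` is; and (iii) for every
`D`-pointed oriented graph `C` on at most `k` vertices and every homomorphism
`φ : V(D*) → V(C)` there is a unique homomorphism `f : V(D) → V(C)` with `φ = f ∘ ψ`. -/
theorem oriented_sparse_incomparability {V : Type} [Fintype V] (D : OrientedGraph V)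
    (k ℓ : ℕ) (hk : 0 < k) (hℓ : 0 < ℓ) :
    ∃ (m : ℕ) (Dstar : OrientedGraph (Fin m)) (ψ : Fin m → V),
      Function.Surjective ψ ∧ IsHom Dstar D ψ ∧
      GirthAtLeast Dstar ℓ ∧
      (∀ (W : Type) (_ : Fintype W) (C : OrientedGraph W), Fintype.card W ≤ k →
        ((∃ φ : Fin m → W, IsHom Dstar C φ) ↔ (∃ f : V → W, IsHom D C f))) ∧
      (∀ (W : Type) (_ : Fintype W) (C : OrientedGraph W), Fintype.card W ≤ k →
        IsPointedOf C D →
        ∀ φ : Fin m → W, IsHom Dstar C φ →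
          ∃! f : V → W, IsHom D C f ∧ φ = f ∘ ψ) := by
  obtain ⟨δ, hδ, hcol, hdis⟩ := exists_pos_pow_mul_le_one_and_mul_le_half (Fintype.card V) k
  obtain ⟨X, _, _, r, hwalk, hmix, htrap⟩ := exists_sparse_mixing_digraph ℓ hδ
  let e : Fin (Fintype.card (V × X)) ≃ V × X := (Fintype.equivFin (V × X)).symm
  let Dstar := (D.tensor r).comap e
  have hψ : Surjective (Prod.fst ∘ e) := Prod.fst_surjective.comp e.surjective
  have hom : IsHom Dstar D (Prod.fst ∘ e) := (isHom_fst_tensor D r).comp (isHom_comap _ e)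
  have factor : ∀ (W : Type) (_ : Fintype W) (C : OrientedGraph W), Fintype.card W ≤ k →
      ∀ φ, IsHom Dstar C φ →
        ∃ f : V → W, IsHom D C f ∧ (IsPointedOf C D → φ = f ∘ Prod.fst ∘ e) := by
    intro W _ C hW φ hφ
    obtain ⟨f, hf, hfφ⟩ := exists_isHom_of_isHom_tensor hmix htrap hδ.le (hcol _ hW) (hdis _ hW)
      (hφ.comp (isHom_symm_comap _ e))
    exact ⟨f, hf, fun hC => (e.comp_symm_eq _ _).1 (hfφ hC)⟩
  refine ⟨_, Dstar, Prod.fst ∘ e, hψ, hom,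
    hwalk.girthAtLeast (Prod.snd ∘ e) fun _ _ h => h.2, ?_, ?_⟩
  · intro W _ C hW
    refine ⟨fun ⟨φ, hφ⟩ => ?_, fun ⟨f, hf⟩ => ⟨_, hf.comp hom⟩⟩
    obtain ⟨f, hf, -⟩ := factor W _ C hW φ hφ
    exact ⟨f, hf⟩
  · intro W _ C hW hC φ hφ
    obtain ⟨f, hf, hfφ⟩ := factor W _ C hW φ hφ
    exact ⟨f, ⟨hf, hfφ hC⟩, fun g hg => hψ.injective_comp_right (hg.2.symm.trans (hfφ hC))⟩
end

section
/- For every finite oriented core D and every positive integer ℓ, there exists a finite oriented graph D* of girth at least ℓ that is uniquely D-colourable. -/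
/-! Blow up `D` around the cycle `ZMod N`, joining copy `a` to copies `a + 1, …, a + K`. A
directed cycle of the blow-up winds around `ZMod N` in steps of at most `K`, so it has length at
least `N / K`.

A `D`-colouring of the blow-up is a cyclic sequence of maps `F a : V → V` such that `F a → F b` in
the exponential digraph of `D` whenever `1 ≤ b - a ≤ K`. If `K` is large, then by pigeonhole each
window of bounded length contains a repetition `F a = F b`, and `F a → F a` says that `F a` is an
endomorphism, hence an automorphism. An arc between automorphisms `g → h` of a finite digraph can
be reversed, and `g ⇄ h` forces `g = h`: moving a single vertex from its image under `g` to its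
image under `h` gives another endomorphism, and in a core two endomorphisms never differ at
exactly one vertex. Hence any term of the sequence lying between two nearby automorphisms equals
both, and the sequence is constant. -/

/-- Adjacency in the exponential digraph `C ^ D`, whose vertices are all maps from the vertices of
`D` to those of `C`. Its loops are the homomorphisms: `ExpAdj D C g g` unfolds to `IsHom D C g`. -/
def ExpAdj {V W : Type} (D : OrientedGraph V) (C : OrientedGraph W) (g h : V → W) : Prop :=
  ∀ ⦃x y⦄, D.Adj x y → C.Adj (g x) (h y)

/-- `G` is uniquely `D`-colourable: it maps homomorphically onto `D`, and any two `D`-colourings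
differ by an automorphism of `D`. -/
def IsUniquelyColourable {U V : Type} (G : OrientedGraph U) (D : OrientedGraph V) : Prop :=
  (∃ ψ : U → V, IsHom G D ψ ∧ Function.Surjective ψ) ∧
    ∀ ψ φ : U → V, IsHom G D ψ → IsHom G D φ → ∃ f : V → V, IsAuto D f ∧ ψ = f ∘ φ

namespace OrientedGraph

/-- The pullback of an oriented graph along a map of vertices, used to relabel the vertices by
`Fin m`. -/
def comap_s2 {U V : Type} (e : U → V) (G : OrientedGraph V) : OrientedGraph U where
  Adj x y := G.Adj (e x) (e y)
  irrefl x := G.irrefl (e x)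
  asymm x y := G.asymm (e x) (e y)

/-- The circular blow-up of `D`: a copy of the vertex set of `D` for every residue modulo `N`, with
the arcs of `D` drawn from each copy to the `K` following ones. -/
def circularBlowup {V : Type} (D : OrientedGraph V) (N K : ℕ) : OrientedGraph (V × ZMod N) where
  Adj p q := D.Adj p.1 q.1 ∧ ∃ k ∈ Set.Icc 1 K, q.2 = p.2 + k
  irrefl p h := D.irrefl p.1 h.1
  asymm p q h h' := D.asymm p.1 q.1 h.1 h'.1

end OrientedGraph

variable {U V W : Type} {D : OrientedGraph V} {C : OrientedGraph W} {G : OrientedGraph U}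

lemma IsAuto.comp {g h : V → V} (hg : IsAuto D g) (hh : IsAuto D h) : IsAuto D (g ∘ h) :=
  ⟨hg.1.comp hh.1, fun x y => (hh.2 x y).trans (hg.2 (h x) (h y))⟩

lemma IsAuto.exists_leftInverse {g : V → V} (hg : IsAuto D g) :
    ∃ h, IsAuto D h ∧ Function.LeftInverse h g := by
  obtain ⟨h, hleft, hright⟩ := Function.bijective_iff_has_inverse.1 hg.1
  refine ⟨h, ⟨⟨hright.injective, hleft.surjective⟩, fun x y => ?_⟩, hleft⟩
  rw [hg.2 (h x) (h y), hright, hright]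

lemma IsUniquelyColourable.of_forall_factor {π : U → V} (hπ : IsHom G D π)
    (hsurj : Function.Surjective π)
    (hfactor : ∀ φ, IsHom G D φ → ∃ g, IsAuto D g ∧ φ = g ∘ π) :
    IsUniquelyColourable G D := by
  refine ⟨⟨π, hπ, hsurj⟩, fun ψ φ hψ hφ => ?_⟩
  obtain ⟨g, hg, rfl⟩ := hfactor ψ hψ
  obtain ⟨h, hh, rfl⟩ := hfactor φ hφ
  obtain ⟨k, hk, hkh⟩ := hh.exists_leftInverse
  exact ⟨g ∘ k, hg.comp hk, by rw [Function.comp_assoc, ← Function.comp_assoc k, hkh.id,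
    Function.id_comp]⟩

lemma IsUniquelyColourable.comap_equiv {U' : Type} (hG : IsUniquelyColourable G D) (e : U' ≃ U) :
    IsUniquelyColourable (G.comap_s2 e) D := by
  have isHom_symm {χ : U' → V} (hχ : IsHom (G.comap_s2 e) D χ) : IsHom G D (χ ∘ e.symm) :=
    fun x y hxy => hχ (by simpa [OrientedGraph.comap_s2] using hxy)
  obtain ⟨⟨ψ, hψ, hsurj⟩, huniq⟩ := hG
  refine ⟨⟨ψ ∘ e, fun _ _ hxy => hψ hxy, hsurj.comp e.surjective⟩, fun ψ φ hψ hφ => ?_⟩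
  obtain ⟨f, hf, hψφ⟩ := huniq _ _ (isHom_symm hψ) (isHom_symm hφ)
  exact ⟨f, hf, e.symm.surjective.injective_comp_right hψφ⟩

lemma GirthAtLeast.comap_s2 {ℓ : ℕ} (hG : GirthAtLeast G ℓ) {e : V → U}
    (he : Function.Injective e) : GirthAtLeast (G.comap_s2 e) ℓ :=
  fun m hm hmℓ ⟨c, hc, hadj⟩ => hG m hm hmℓ ⟨e ∘ c, he.comp hc, hadj⟩

lemma girthAtLeast_circularBlowup (D : OrientedGraph V) {N K ℓ : ℕ} (hN : ℓ * K ≤ N) :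
    GirthAtLeast (D.circularBlowup N K) ℓ := by
  rintro m hm hmℓ ⟨c, -, hadj⟩
  have : NeZero m := ⟨hm.ne'⟩
  choose k hk hstep using fun i => (hadj i).2
  have hpos : 0 < ∑ i, k i := Finset.sum_pos (fun i _ => (hk i).1) Finset.univ_nonempty
  have hK : 0 < K := (hk 0).1.trans (hk 0).2
  have hlt : ∑ i, k i < N := calc
    ∑ i, k i ≤ m * K := by
      simpa using Finset.sum_le_card_nsmul Finset.univ k K fun i _ => (hk i).2
    _ < ℓ * K := Nat.mul_lt_mul_of_pos_right hmℓ hK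
    _ ≤ N := hN
  have hclosed : ((∑ i, k i : ℕ) : ZMod N) = 0 := by
    have hshift : ∑ i, (c (i + 1)).2 = ∑ i, (c i).2 :=
      Equiv.sum_comp (Equiv.addRight (1 : ZMod m)) fun i => (c i).2
    simpa [hstep, Finset.sum_add_distrib] using hshift
  exact hpos.ne' (Nat.eq_zero_of_dvd_of_lt ((ZMod.natCast_eq_zero_iff _ _).1 hclosed) hlt)

lemma IsPointedOf.eq_of_expAdj_of_expAdj (hC : IsPointedOf C D) {g h : V → W}
    (hg : IsHom D C g) (hgh : ExpAdj D C g h) (hhg : ExpAdj D C h g) : g = h := by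
  classical
  by_contra hne
  obtain ⟨v, hv⟩ := Function.ne_iff.1 hne
  have hom_update : IsHom D C (Function.update g v (h v)) := by
    intro x y hxy
    rcases eq_or_ne x v with rfl | hx
    · have hyx : y ≠ x := by
        rintro rfl
        exact D.irrefl _ hxy
      simpa [hyx] using hhg hxy
    · rcases eq_or_ne y v with rfl | hy
      · simpa [hx] using hgh hxy
      · simpa [hx, hy] using hg hxy
  exact hC ⟨g, _, hg, hom_update, fun heq => hv (by simpa using congrFun heq v), v,
    fun u hu => (Function.update_of_ne hu _ _).symm⟩

lemma IsCore.isPointedOf (hD : IsCore D) : IsPointedOf D D := by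
  rintro ⟨f, g, hf, hg, hne, v, hagree⟩
  refine hne (funext fun u => ?_)
  rcases eq_or_ne u v with rfl | hu
  · obtain ⟨t, ht⟩ := (hD g hg).1.2 (f u)
    rcases eq_or_ne t u with rfl | htu
    · exact ht.symm
    · exact absurd ((hD f hf).1.1 ((hagree t htu).trans ht)) htu
  · exact hagree u hu

lemma ExpAdj.adj_iff [Finite V] {g h : V → V} (hgh : ExpAdj D D g h)
    (hg : Function.Injective g) (hh : Function.Injective h) (x y : V) :
    D.Adj (g x) (h y) ↔ D.Adj x y := by
  refine ⟨fun hadj => ?_, fun hxy => hgh hxy⟩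
  let arcs : Set (V × V) := {p | D.Adj p.1 p.2}
  have hinj : Function.Injective (Prod.map g h) := hg.prodMap hh
  have hmaps : Set.MapsTo (Prod.map g h) arcs arcs := fun _ hp => hgh hp
  have hsurj : Set.SurjOn (Prod.map g h) arcs arcs :=
    ((arcs.toFinite.injOn_iff_bijOn_of_mapsTo hmaps).1 hinj.injOn).surjOn
  obtain ⟨p, hp, hpxy⟩ := hsurj (show (g x, h y) ∈ arcs from hadj)
  obtain rfl : p = (x, y) := hinj hpxy
  exact hp

lemma ExpAdj.symm_of_isAuto [Finite V] {g h : V → V} (hgh : ExpAdj D D g h)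
    (hg : IsAuto D g) (hh : IsAuto D h) : ExpAdj D D h g := by
  intro x y hxy
  obtain ⟨z, hz⟩ := hh.1.2 (g y)
  have hgx : D.Adj (g x) (h z) := hz ▸ (hg.2 x y).1 hxy
  have hxz : D.Adj x z := (hgh.adj_iff hg.1.1 hh.1.1 x z).1 hgx
  exact hz ▸ (hh.2 x z).1 hxz

lemma IsCore.eq_of_expAdj [Finite V] (hD : IsCore D) {g h : V → V} (hg : IsHom D D g)
    (hh : IsHom D D h) (hgh : ExpAdj D D g h) : g = h :=
  hD.isPointedOf.eq_of_expAdj_of_expAdj hg hgh (hgh.symm_of_isAuto (hD g hg) (hD h hh))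

lemma exists_rel_self_of_forall_rel {α : Type*} [Finite α] {r : α → α → Prop} {F : ℤ → α}
    (hF : ∀ a b : ℤ, a < b → b ≤ a + Nat.card α → r (F a) (F b)) (x : ℤ) :
    ∃ a, x ≤ a ∧ a ≤ x + Nat.card α ∧ r (F a) (F a) := by
  have := Fintype.ofFinite α
  obtain ⟨a, ha, b, hb, hne, heq⟩ : ∃ a ∈ Finset.Icc x (x + Nat.card α),
      ∃ b ∈ Finset.Icc x (x + Nat.card α), a ≠ b ∧ F a = F b :=
    Finset.exists_ne_map_eq_of_card_lt_of_maps_to (t := Finset.univ)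
      (by rw [Finset.card_univ, ← Nat.card_eq_fintype_card, Int.card_Icc]; omega) (by simp)
  rw [Finset.mem_Icc] at ha hb
  wlog hab : a < b generalizing a b
  · exact this b hb a ha hne.symm heq.symm (by omega)
  · exact ⟨a, ha.1, ha.2, by simpa [← heq] using hF a b hab (by omega)⟩

lemma IsCore.isHom_and_eq_of_forall_expAdj [Finite V] (hD : IsCore D) {F : ℤ → V → V}
    (hF : ∀ a b : ℤ, a < b → b ≤ a + (2 * Nat.card (V → V) + 2) → ExpAdj D D (F a) (F b)) (x : ℤ) :
    IsHom D D (F x) ∧ F x = F 0 := by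
  have exists_isHom (y : ℤ) : ∃ a, y ≤ a ∧ a ≤ y + Nat.card (V → V) ∧ IsHom D D (F a) :=
    exists_rel_self_of_forall_rel (fun a b hab hba => hF a b hab (by omega)) y
  have isHom (y : ℤ) : IsHom D D (F y) := by
    obtain ⟨a, ha, hay, homa⟩ := exists_isHom (y - Nat.card (V → V) - 1)
    obtain ⟨b, hb, hyb, homb⟩ := exists_isHom (y + 1)
    have hab : F a = F b := hD.eq_of_expAdj homa homb (hF a b (by omega) (by omega))
    have hya : ExpAdj D D (F y) (F a) := hab ▸ hF y b (by omega) (by omega)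
    rwa [← hD.isPointedOf.eq_of_expAdj_of_expAdj homa (hF a y (by omega) (by omega)) hya]
  have periodic : Function.Periodic F 1 := fun y =>
    (hD.eq_of_expAdj (isHom y) (isHom (y + 1)) (hF y (y + 1) (by omega) (by omega))).symm
  exact ⟨isHom x, by simpa using periodic.int_mul_eq x⟩

lemma IsCore.exists_isAuto_eq_comp_fst [Finite V] (hD : IsCore D) {N K : ℕ}
    (hK : 2 * Nat.card (V → V) + 2 ≤ K) {φ : V × ZMod N → V}
    (hφ : IsHom (D.circularBlowup N K) D φ) : ∃ g, IsAuto D g ∧ φ = g ∘ Prod.fst := by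
  let F (a : ℤ) (v : V) : V := φ (v, a)
  have hF (a b : ℤ) (hab : a < b) (hba : b ≤ a + (2 * Nat.card (V → V) + 2)) :
      ExpAdj D D (F a) (F b) := by
    obtain ⟨k, rfl⟩ := Int.le.dest hab.le
    exact fun u v huv => hφ ⟨huv, k, ⟨by omega, by omega⟩, by push_cast; rfl⟩
  refine ⟨F 0, hD _ (hD.isHom_and_eq_of_forall_expAdj hF 0).1, ?_⟩
  ext ⟨v, a⟩
  obtain ⟨a, rfl⟩ := ZMod.intCast_surjective a
  exact congrFun (hD.isHom_and_eq_of_forall_expAdj hF a).2 v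

lemma IsCore.isUniquelyColourable_circularBlowup [Finite V] (hD : IsCore D) (N : ℕ) {K : ℕ}
    (hK : 2 * Nat.card (V → V) + 2 ≤ K) : IsUniquelyColourable (D.circularBlowup N K) D :=
  .of_forall_factor (fun _ _ hpq => hpq.1) Prod.fst_surjective
    fun _ hφ => hD.exists_isAuto_eq_comp_fst hK hφ

/-- **Corollary 3.** For every finite oriented core `D` and every positive integer `ℓ`,
there is a finite oriented graph `D*` of girth at least `ℓ` that is uniquely
`D`-colourable: there is a homomorphism of `D*` onto `D`, and any two `D`-colourings of
`D*` differ by an automorphism of `D`. -/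
theorem zhu_type_corollary {V : Type} [Fintype V] (D : OrientedGraph V)
    (hD : IsCore D) (ℓ : ℕ) (hℓ : 0 < ℓ) :
    ∃ (m : ℕ) (Dstar : OrientedGraph (Fin m)),
      GirthAtLeast Dstar ℓ ∧
      (∃ ψ : Fin m → V, IsHom Dstar D ψ ∧ Function.Surjective ψ) ∧
      (∀ ψ φ : Fin m → V, IsHom Dstar D ψ → IsHom Dstar D φ →
        ∃ f : V → V, IsAuto D f ∧ ψ = f ∘ φ) := by
  let K := 2 * Nat.card (V → V) + 2
  have : NeZero (ℓ * K) := ⟨(Nat.mul_pos hℓ (Nat.succ_pos _)).ne'⟩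
  let e := (Fintype.equivFin (V × ZMod (ℓ * K))).symm
  exact ⟨_, (D.circularBlowup (ℓ * K) K).comap_s2 e,
    (girthAtLeast_circularBlowup D le_rfl).comap_s2 e.injective,
    (hD.isUniquelyColourable_circularBlowup (ℓ * K) le_rfl).comap_equiv e⟩
end

section
/- Every finite oriented graph D that is a core is D-pointed; that is, there do not exist two distinct homomorphisms from D to D that agree on all but one vertex of D. -/
theorem eq_of_surjective_of_injective_of_forall_ne {α β : Type*} {f g : α → β} {v : α}
    (hf : Function.Surjective f) (hg : Function.Injective g) (hfg : ∀ u, u ≠ v → f u = g u) :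
    f = g := by
  obtain ⟨u, hu⟩ := hf (g v)
  obtain rfl : u = v := by
    by_contra huv
    exact huv (hg ((hfg u huv).symm.trans hu))
  funext w
  obtain rfl | hwu := eq_or_ne w u
  · exact hu
  · exact hfg w hwu

theorem isPointedOf_of_forall_isHom_bijective {VC VD : Type} {C : OrientedGraph VC}
    {D : OrientedGraph VD} (h : ∀ f, IsHom D C f → Function.Bijective f) : IsPointedOf C D := by
  rintro ⟨f, g, hf, hg, hne, v, hfg⟩
  exact hne (eq_of_surjective_of_injective_of_forall_ne (h f hf).surjective (h g hg).injective hfg)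

theorem core_is_self_pointed_general {V : Type} (D : OrientedGraph V) (h : IsCore D) :
    IsPointedOf D D :=
  isPointedOf_of_forall_isHom_bijective fun f hf => (h f hf).1

/-- Every finite oriented graph `D` that is a core is `D`-pointed: there do not exist two
distinct homomorphisms from `D` to `D` that agree on all but one vertex of `D`. -/
theorem core_is_self_pointed {V : Type} [Fintype V] (D : OrientedGraph V)
    (h : IsCore D) : IsPointedOf D D :=
  core_is_self_pointed_general D h
end

section
/- For every integer ℓ ≥ 3 with ℓ ≠ 5, the directed cycle on ℓ vertices admits a homomorphism to some tournament on 4 vertices. -/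
/-- The directed cycle on `ℓ` vertices (`ℓ ≥ 3`): vertices `ZMod ℓ`, arcs `i → i + 1`. -/
def dirCycle (ℓ : ℕ) (hℓ : 3 ≤ ℓ) : OrientedGraph (ZMod ℓ) where
  Adj i j := j = i + 1
  irrefl v h := by
    haveI : NeZero ℓ := ⟨by omega⟩
    have h1 : ((1 : ℕ) : ZMod ℓ) = 0 := by
      have : v + 1 = v + 0 := by simpa using h.symm
      simpa using add_left_cancel this
    have : ℓ ∣ 1 := (CharP.cast_eq_zero_iff (ZMod ℓ) ℓ 1).mp h1
    have := Nat.le_of_dvd one_pos this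
    omega
  asymm u v h h' := by
    haveI : NeZero ℓ := ⟨by omega⟩
    have hu : u = u + 2 := by
      calc u = v + 1 := h'
        _ = (u + 1) + 1 := by rw [h]
        _ = u + 2 := by ring
    have h2 : ((2 : ℕ) : ZMod ℓ) = 0 := by
      have : u + 2 = u + 0 := by simpa using hu.symm
      simpa using add_left_cancel this
    have : ℓ ∣ 2 := (CharP.cast_eq_zero_iff (ZMod ℓ) ℓ 2).mp h2
    have := Nat.le_of_dvd two_pos this
    omega

/-!
A homomorphism from the directed cycle on `ℓ` vertices is a closed walk of length `ℓ`, and closed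
walks based at a common vertex can be concatenated. The strong tournament on four vertices has
closed walks of lengths `3` and `4` through one vertex, and every `ℓ ≥ 3` other than `5` is of the
form `3 * a + 4 * b`.
-/

namespace OrientedGraph

variable {V : Type} {G : OrientedGraph V} {v : V}

/-- The lengths of closed walks of `G` based at `v`, an additive submonoid of `ℕ` under
concatenation. A walk of length `n` is encoded as a sequence `w : ℕ → V` of which only the values
`w 0, …, w n` matter. -/
def closedWalkLengths (G : OrientedGraph V) (v : V) : AddSubmonoid ℕ where
  carrier := {n | ∃ w : ℕ → V, w 0 = v ∧ w n = v ∧ ∀ i < n, G.Adj (w i) (w (i + 1))}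
  zero_mem' := ⟨fun _ ↦ v, by simp⟩
  add_mem' := by
    rintro m n ⟨p, hp_zero, hp_end, hp_adj⟩ ⟨q, hq_zero, hq_end, hq_adj⟩
    refine ⟨fun i ↦ if i < m then p i else q (i - m), by grind, by grind, fun i hi ↦ ?_⟩
    obtain h | h | h : i + 1 < m ∨ i + 1 = m ∨ m ≤ i := by lia
    · simpa [h, Nat.lt_of_succ_lt h] using hp_adj i (by lia)
    · have hpq : p (i + 1) = q 0 := by rw [h, hp_end, hq_zero]
      simpa [← h, hpq] using hp_adj i (by lia)
    · simpa [h.not_gt, (h.trans i.le_succ).not_gt, Nat.sub_add_comm h]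
        using hq_adj (i - m) (by lia)

theorem exists_isHom_dirCycle_of_mem_closedWalkLengths {ℓ : ℕ} (hℓ : 3 ≤ ℓ)
    (h : ℓ ∈ G.closedWalkLengths v) : ∃ f : ZMod ℓ → V, IsHom (dirCycle ℓ hℓ) G f := by
  obtain ⟨w, hw_zero, hw_end, hw_adj⟩ := h
  have : NeZero ℓ := ⟨by lia⟩
  have hw_succ (x : ZMod ℓ) : w (x + 1).val = w (x.val + 1) := by
    rw [ZMod.val_add, ZMod.val_one'' (by lia)]
    obtain hlt | heq : x.val + 1 < ℓ ∨ x.val + 1 = ℓ := Nat.lt_or_eq_of_le x.val_lt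
    · rw [Nat.mod_eq_of_lt hlt]
    · rw [heq, Nat.mod_self, hw_zero, hw_end]
  refine ⟨fun x ↦ w x.val, ?_⟩
  rintro x _ rfl
  simpa only [hw_succ] using hw_adj x.val x.val_lt

end OrientedGraph

theorem mem_addSubmonoid_of_three_mem_of_four_mem {S : AddSubmonoid ℕ} (h3 : 3 ∈ S) (h4 : 4 ∈ S)
    {n : ℕ} (hn : 3 ≤ n) (hn5 : n ≠ 5) : n ∈ S := by
  -- As `4 ≡ 1 [MOD 3]`, subtracting `n % 3` copies of `4` leaves a multiple of `3`.
  obtain ⟨a, b, rfl⟩ : ∃ a b, n = a • 3 + b • 4 :=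
    ⟨(n - 4 * (n % 3)) / 3, n % 3, by simp only [smul_eq_mul]; lia⟩
  exact add_mem (nsmul_mem h3 a) (nsmul_mem h4 b)

/-- The strongly connected tournament on four vertices: the directed cycle `0 → 1 → 2 → 3 → 0`
with the chords `0 → 2` and `1 → 3`. Addition in `Fin 4` is modulo `4`. -/
def strongTournament4 : OrientedGraph (Fin 4) where
  Adj u v := v = u + 1 ∨ v = u + 2 ∧ u < v
  irrefl := by decide
  asymm := by decide

namespace strongTournament4

instance : DecidableRel strongTournament4.Adj :=
  fun u v ↦ inferInstanceAs (Decidable (v = u + 1 ∨ v = u + 2 ∧ u < v))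

theorem isTournament : IsTournament strongTournament4 := by
  unfold IsTournament
  decide

theorem three_mem_closedWalkLengths : 3 ∈ strongTournament4.closedWalkLengths 0 :=
  ⟨fun i ↦ ![0, 2, 3] (Fin.ofNat 3 i), by decide⟩

theorem four_mem_closedWalkLengths : 4 ∈ strongTournament4.closedWalkLengths 0 :=
  ⟨Fin.ofNat 4, by decide⟩

end strongTournament4

/-- For every integer `ℓ ≥ 3` with `ℓ ≠ 5`, the directed cycle on `ℓ` vertices admits a
homomorphism to some tournament on 4 vertices. -/
theorem hom_cycle_to_tournament4 (ℓ : ℕ) (hℓ : 3 ≤ ℓ) (hne : ℓ ≠ 5) :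
    ∃ T : OrientedGraph (Fin 4), IsTournament T ∧
      ∃ f : ZMod ℓ → Fin 4, IsHom (dirCycle ℓ hℓ) T f := by
  have hmem : ℓ ∈ strongTournament4.closedWalkLengths 0 :=
    mem_addSubmonoid_of_three_mem_of_four_mem
      strongTournament4.three_mem_closedWalkLengths
      strongTournament4.four_mem_closedWalkLengths hℓ hne
  exact ⟨strongTournament4, strongTournament4.isTournament,
    OrientedGraph.exists_isHom_dirCycle_of_mem_closedWalkLengths hℓ hmem⟩
end

section
/- Let D be a finite oriented graph with vertex set {1, …, a}, let k and ℓ be positive integers, fix ε with 0 < ε < 1/(4ℓ), and set p = n^{ε−1}. Then, as n → ∞, the probability that a random oriented graph D̂ drawn from 𝒟(n, p) has at most n^{εℓ} directed cycles of length less than ℓ and that these short cycles are pairwise vertex-disjoint tends to 1. -/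
open MeasureTheory

/-- The vertex set `V₁ ∪ ⋯ ∪ V_a` of the blown-up graph `D₀`, where
`V_i = {i} × Fin n` has size `n`. -/
abbrev Vtx (a n : ℕ) : Type := Fin a × Fin n

/-- The part `V_i` of the vertex set of `D₀`. -/
def cellV (a n : ℕ) (i : Fin a) : Set (Vtx a n) := {x | x.1 = i}

/-- A sample point: for each potential arc of `D₀`, whether it is included. -/
abbrev Omega (a n : ℕ) : Type := Vtx a n × Vtx a n → Bool

/-- The Bernoulli measure on `Bool` with success probability `p`. -/
noncomputable def bernoulliBool (p : ℝ) : Measure Bool :=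
  ENNReal.ofReal p • Measure.dirac true + ENNReal.ofReal (1 - p) • Measure.dirac false

/-- The random oriented graph model `𝒟(n, p)`: each potential arc of `D₀` is included
independently with probability `p` (product of Bernoulli measures). -/
noncomputable def model (a n : ℕ) (p : ℝ) : Measure (Omega a n) :=
  Measure.pi fun _ : Vtx a n × Vtx a n => bernoulliBool p

/-- The random spanning subgraph `D̂` of `D₀` determined by the sample point `ω`: the arc
`x → y` is present iff `x ∈ V_i`, `y ∈ V_j` for an arc `i → j` of `D` and `ω` selects the
pair `(x, y)`. -/
def Dhat {a : ℕ} (D : OrientedGraph (Fin a)) (n : ℕ) (ω : Omega a n) :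
    OrientedGraph (Vtx a n) where
  Adj x y := D.Adj x.1 y.1 ∧ ω (x, y) = true
  irrefl x h := D.irrefl x.1 h.1
  asymm x y h h' := D.asymm x.1 y.1 h.1 h'.1

/-- `S` is the arc set of a directed cycle of length `m` in `G`; directed cycles are
counted up to cyclic rotation, and a directed cycle is uniquely determined (up to
rotation) by its arc set. -/
def IsCycleArcSet {V : Type} (G : OrientedGraph V) (m : ℕ) (S : Set (V × V)) : Prop :=
  ∃ c : ZMod m → V, Function.Injective c ∧ (∀ i, G.Adj (c i) (c (i + 1))) ∧
    S = Set.range fun i => (c i, c (i + 1))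

/-- `S` is the arc set of a directed cycle of length less than `ℓ` in `G`. -/
def IsShortCycleArcSet {V : Type} (G : OrientedGraph V) (ℓ : ℕ) (S : Set (V × V)) : Prop :=
  ∃ m : ℕ, 0 < m ∧ m < ℓ ∧ IsCycleArcSet G m S

/-- The number of directed cycles of length less than `ℓ` in `G`, counted up to cyclic
rotation (i.e. the number of their arc sets). -/
noncomputable def numShortCycles {V : Type} (G : OrientedGraph V) (ℓ : ℕ) : ℕ :=
  Nat.card {S : Set (V × V) // IsShortCycleArcSet G ℓ S}

/-- The vertex `x` lies on the (cycle with) arc set `S`. -/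
def OnArcSet {V : Type} (S : Set (V × V)) (x : V) : Prop :=
  ∃ y, (x, y) ∈ S ∨ (y, x) ∈ S

/-!
Both requirements follow from a first-moment computation, with `N = a n` vertices and
`N p = a n ^ ε`.

* A cycle of length `m` is present with probability `p ^ m`, so the expected number of short cycles
  is at most `∑ m < ℓ, (N p) ^ m = O(n ^ (ε (ℓ - 1)))`, which is `o(n ^ (ε ℓ))`; conclude by
  Markov's inequality.
* If two distinct short cycles meet, their union has more arcs than vertices: otherwise every vertex
  would have out-degree one in the union, and following arcs from a common vertex would trace both
  cycles at once. The expected number of sets of `v + 1` arcs on `v` vertices is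
  `O(N ^ v p ^ (v + 1)) = O(n ^ (ε (v + 1) - 1))`, and only `v + 1 ≤ 2 (ℓ - 1)` matters.
-/

open Finset Filter Topology unitInterval

section FirstMoment

variable {E ι : Type*} (p : I)

instance isProbabilityMeasure_bernoulliBool : IsProbabilityMeasure (bernoulliBool p) where
  measure_univ := by
    simp [bernoulliBool, ← ENNReal.ofReal_add p.2.1 (sub_nonneg.2 p.2.2)]

instance isProbabilityMeasure_model (a n : ℕ) : IsProbabilityMeasure (model a n p) :=
  inferInstanceAs (IsProbabilityMeasure (Measure.pi _))

lemma bernoulliBool_singleton_true (p : ℝ) : bernoulliBool p {true} = ENNReal.ofReal p := by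
  simp [bernoulliBool]

variable [Fintype E]

lemma measureReal_pi_bernoulliBool_forall_mem (W : Finset E) :
    (Measure.pi fun _ : E => bernoulliBool p).real {ω | ∀ e ∈ W, ω e = true} = (p : ℝ) ^ #W := by
  have hpi : {ω : E → Bool | ∀ e ∈ W, ω e = true} = (W : Set E).pi fun _ => {true} := rfl
  simp [Measure.real, hpi, Measure.pi_pi_finset, bernoulliBool_singleton_true,
    ENNReal.toReal_ofReal p.2.1]

lemma measureReal_pi_bernoulliBool_exists_forall_mem_le (s : Finset ι) (W : ι → Finset E) :
    (Measure.pi fun _ : E => bernoulliBool p).real {ω | ∃ i ∈ s, ∀ e ∈ W i, ω e = true} ≤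
      ∑ i ∈ s, (p : ℝ) ^ #(W i) := by
  have hUnion : {ω : E → Bool | ∃ i ∈ s, ∀ e ∈ W i, ω e = true} =
      ⋃ i ∈ s, {ω | ∀ e ∈ W i, ω e = true} := by ext; simp
  rw [hUnion]
  exact (measureReal_biUnion_finset_le s _).trans_eq <|
    sum_congr rfl fun i _ => measureReal_pi_bernoulliBool_forall_mem p (W i)

lemma integral_pi_bernoulliBool_card_filter_forall_mem (s : Finset ι) (W : ι → Finset E)
    [∀ ω : E → Bool, DecidablePred fun i => ∀ e ∈ W i, ω e = true] :
    ∫ ω, (#{i ∈ s | ∀ e ∈ W i, ω e = true} : ℝ) ∂(Measure.pi fun _ : E => bernoulliBool p) =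
      ∑ i ∈ s, (p : ℝ) ^ #(W i) := by
  have hindicator (ω : E → Bool) : (#{i ∈ s | ∀ e ∈ W i, ω e = true} : ℝ) =
      ∑ i ∈ s, {ω : E → Bool | ∀ e ∈ W i, ω e = true}.indicator 1 ω := by
    simp [Set.indicator_apply]
  simp_rw [hindicator]
  rw [integral_finsetSum s fun i _ => Integrable.of_finite]
  exact sum_congr rfl fun i _ => (integral_indicator_one (Set.toFinite _).measurableSet).trans
    (measureReal_pi_bernoulliBool_forall_mem p (W i))

lemma measureReal_pi_bernoulliBool_lt_card_filter_le (s : Finset ι) (W : ι → Finset E)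
    [∀ ω : E → Bool, DecidablePred fun i => ∀ e ∈ W i, ω e = true] {t : ℝ} (ht : 0 < t) :
    (Measure.pi fun _ : E => bernoulliBool p).real
        {ω | t < #{i ∈ s | ∀ e ∈ W i, ω e = true}} ≤ (∑ i ∈ s, (p : ℝ) ^ #(W i)) / t := by
  rw [le_div_iff₀' ht, ← integral_pi_bernoulliBool_card_filter_forall_mem]
  refine le_trans (mul_le_mul_of_nonneg_left ?_ ht.le) (mul_meas_ge_le_integral_of_nonneg
    (ae_of_all _ fun ω => Nat.cast_nonneg _) Integrable.of_finite t)
  exact measureReal_mono fun ω (hω : t < _) => hω.le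

end FirstMoment

section Cycles

variable {V : Type*} [DecidableEq V] {m m' : ℕ} [NeZero m] [NeZero m']

/-- The arcs traversed by the cyclic vertex sequence `c`. -/
def cycleArcs (c : ZMod m → V) : Finset (V × V) :=
  univ.image fun i => (c i, c (i + 1))

lemma coe_cycleArcs (c : ZMod m → V) :
    (cycleArcs c : Set (V × V)) = Set.range fun i => (c i, c (i + 1)) := by
  simp [cycleArcs]

lemma mem_cycleArcs {c : ZMod m → V} {e : V × V} :
    e ∈ cycleArcs c ↔ ∃ i, (c i, c (i + 1)) = e := by
  simp [cycleArcs]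

lemma card_cycleArcs {c : ZMod m → V} (hc : Function.Injective c) : #(cycleArcs c) = m := by
  rw [cycleArcs, card_image_of_injective _ fun i j hij => hc (congrArg Prod.fst hij), card_univ,
    ZMod.card]

lemma image_fst_cycleArcs (c : ZMod m → V) : (cycleArcs c).image Prod.fst = univ.image c := by
  rw [cycleArcs, image_image]
  rfl

lemma cycleArcs_subset_product (c : ZMod m → V) :
    cycleArcs c ⊆ univ.image c ×ˢ univ.image c := by
  intro e he
  obtain ⟨i, rfl⟩ := mem_cycleArcs.1 he
  simp

lemma cycleArcs_subset_of_injOn_fst {c : ZMod m → V} {d : ZMod m' → V}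
    (hinj : Set.InjOn Prod.fst (cycleArcs c ∪ cycleArcs d : Set (V × V)))
    {i : ZMod m} {j : ZMod m'} (hij : c i = d j) : cycleArcs c ⊆ cycleArcs d := by
  have next_eq {i j} (h : c i = d j) : (c i, c (i + 1)) = (d j, d (j + 1)) :=
    hinj (.inl (mem_cycleArcs.2 ⟨i, rfl⟩)) (.inr (mem_cycleArcs.2 ⟨j, rfl⟩)) h
  have iterate_eq (k : ℕ) : c (i + k) = d (j + k) := by
    induction k with
    | zero => simpa using hij
    | succ k ih => simpa [add_assoc] using congrArg Prod.snd (next_eq ih)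
  intro e he
  obtain ⟨i', rfl⟩ := mem_cycleArcs.1 he
  have hi' : i + ((i' - i).val : ℕ) = i' := by simp
  exact mem_cycleArcs.2 ⟨_, (next_eq (hi' ▸ iterate_eq (i' - i).val)).symm⟩

lemma card_vertices_lt_card_arcs_of_meet {c : ZMod m → V} {d : ZMod m' → V}
    (hne : cycleArcs c ≠ cycleArcs d) {i : ZMod m} {j : ZMod m'} (hij : c i = d j) :
    #(univ.image c ∪ univ.image d) < #(cycleArcs c ∪ cycleArcs d) := by
  rw [← image_fst_cycleArcs, ← image_fst_cycleArcs, ← image_union]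
  refine card_image_le.lt_of_ne fun hcard => hne ?_
  have hinj := card_image_iff.1 hcard
  rw [coe_union] at hinj
  exact (cycleArcs_subset_of_injOn_fst hinj hij).antisymm
    (cycleArcs_subset_of_injOn_fst (Set.union_comm _ _ ▸ hinj) hij.symm)

lemma card_vertices_lt_of_meet {c : ZMod m → V} {d : ZMod m' → V} {i : ZMod m} {j : ZMod m'}
    (hij : c i = d j) : #(univ.image c ∪ univ.image d) < m + m' := by
  have hinter : 0 < #(univ.image c ∩ univ.image d) :=
    card_pos.2 ⟨c i, mem_inter.2 ⟨by simp, by simp [hij]⟩⟩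
  have hc : #(univ.image c) ≤ m := card_image_le.trans_eq (by simp)
  have hd : #(univ.image d) ≤ m' := card_image_le.trans_eq (by simp)
  have := card_union_add_card_inter (univ.image c) (univ.image d)
  omega

end Cycles

section ShortCycles

variable {V : Type} {G : OrientedGraph V} {ℓ : ℕ}

/-- Some two distinct directed cycles of length less than `ℓ` in `G` have a common vertex. -/
def ShortCyclesMeet (G : OrientedGraph V) (ℓ : ℕ) : Prop :=
  ∃ S T : Set (V × V), IsShortCycleArcSet G ℓ S ∧ IsShortCycleArcSet G ℓ T ∧ S ≠ T ∧
    ∃ x, OnArcSet S x ∧ OnArcSet T x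

variable [DecidableEq V]

lemma onArcSet_cycleArcs {m : ℕ} [NeZero m] {c : ZMod m → V} {x : V} :
    OnArcSet (cycleArcs c : Set (V × V)) x ↔ x ∈ univ.image c := by
  refine ⟨fun ⟨y, hy⟩ => ?_, fun hx => ?_⟩
  · rcases hy with hy | hy
    · exact (mem_product.1 (cycleArcs_subset_product c hy)).1
    · exact (mem_product.1 (cycleArcs_subset_product c hy)).2
  · obtain ⟨i, -, rfl⟩ := mem_image.1 hx
    exact ⟨c (i + 1), .inl (mem_cycleArcs.2 ⟨i, rfl⟩)⟩

lemma IsShortCycleArcSet.exists_cycleArcs {S : Set (V × V)} (hS : IsShortCycleArcSet G ℓ S) :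
    ∃ m < ℓ - 1, ∃ c : ZMod (m + 1) → V, Function.Injective c ∧
      (∀ e ∈ cycleArcs c, G.Adj e.1 e.2) ∧ S = cycleArcs c := by
  obtain ⟨_ | m, hm, hmℓ, c, hc, hadj, rfl⟩ := hS
  · exact absurd hm (lt_irrefl 0)
  · refine ⟨m, by omega, c, hc, fun e he => ?_, (coe_cycleArcs c).symm⟩
    obtain ⟨i, rfl⟩ := mem_cycleArcs.1 he
    exact hadj i

variable [Fintype V]

/-- The injective cyclic vertex sequences of length less than `ℓ`; the first component is the
length minus one, which keeps `ZMod (m + 1)` finite. -/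
def shortCyclicSeqs (V : Type) [DecidableEq V] [Fintype V] (ℓ : ℕ) :
    Finset (Σ m : ℕ, ZMod (m + 1) → V) :=
  (range (ℓ - 1)).sigma fun _ => {c | Function.Injective c}

lemma sum_shortCyclicSeqs_pow_card_cycleArcs_le (ℓ : ℕ) {p : ℝ} (hp : 0 ≤ p) :
    ∑ q ∈ shortCyclicSeqs V ℓ, p ^ #(cycleArcs q.2) ≤
      ∑ m ∈ range (ℓ - 1), (Fintype.card V * p) ^ (m + 1) := by
  rw [shortCyclicSeqs, sum_sigma]
  refine sum_le_sum fun m _ => ?_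
  calc ∑ c : ZMod (m + 1) → V with Function.Injective c, p ^ #(cycleArcs c)
      = ∑ c : ZMod (m + 1) → V with Function.Injective c, p ^ (m + 1) :=
        sum_congr rfl fun c hc => by rw [card_cycleArcs (mem_filter.1 hc).2]
    _ ≤ ∑ _c : ZMod (m + 1) → V, p ^ (m + 1) :=
        sum_le_sum_of_subset_of_nonneg (filter_subset _ _) fun _ _ _ => by positivity
    _ = (Fintype.card V * p) ^ (m + 1) := by simp [ZMod.card, mul_pow]

lemma numShortCycles_le_card_filter {ω : V × V → Bool}
    (hω : ∀ x y, G.Adj x y → ω (x, y) = true) :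
    numShortCycles G ℓ ≤ #{q ∈ shortCyclicSeqs V ℓ | ∀ e ∈ cycleArcs q.2, ω e = true} := by
  set s := {q ∈ shortCyclicSeqs V ℓ | ∀ e ∈ cycleArcs q.2, ω e = true}
  let arcSet (q : Σ m : ℕ, ZMod (m + 1) → V) : Set (V × V) := cycleArcs q.2
  have hsub : {S | IsShortCycleArcSet G ℓ S} ⊆ arcSet '' s := by
    intro S hS
    obtain ⟨m, hm, c, hc, hadj, rfl⟩ := hS.exists_cycleArcs
    refine ⟨⟨m, c⟩, ?_, rfl⟩
    simpa [s, shortCyclicSeqs, hm, hc] using fun x y hxy => hω x y (hadj (x, y) hxy)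
  calc numShortCycles G ℓ
      ≤ (arcSet '' s).ncard :=
        Set.ncard_le_ncard hsub (s.finite_toSet.image _)
    _ ≤ (s : Set (Σ m : ℕ, ZMod (m + 1) → V)).ncard := Set.ncard_image_le s.finite_toSet
    _ = #s := Set.ncard_coe_finset s

/-- The sets of `v + 1` arcs spanned by some `v` vertices. -/
def denseArcSets (V : Type) [DecidableEq V] [Fintype V] (v : ℕ) : Finset (Finset (V × V)) :=
  (powersetCard v univ).biUnion fun U => powersetCard (v + 1) (U ×ˢ U)

lemma card_of_mem_denseArcSets {v : ℕ} {W : Finset (V × V)} (hW : W ∈ denseArcSets V v) :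
    #W = v + 1 := by
  obtain ⟨U, -, hWU⟩ := mem_biUnion.1 hW
  exact (mem_powersetCard.1 hWU).2

lemma card_denseArcSets_le (v : ℕ) :
    #(denseArcSets V v) ≤ Fintype.card V ^ v * (v * v) ^ (v + 1) := by
  refine (card_biUnion_le_card_mul _ _ ((v * v) ^ (v + 1)) fun U hU => ?_).trans ?_
  · rw [card_powersetCard, card_product, (mem_powersetCard.1 hU).2]
    exact Nat.choose_le_pow _ _
  · rw [card_powersetCard, card_univ]
    gcongr
    exact Nat.choose_le_pow _ _

lemma ShortCyclesMeet.exists_mem_denseArcSets (h : ShortCyclesMeet G ℓ) :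
    ∃ v < 2 * ℓ - 2, ∃ W ∈ denseArcSets V v, ∀ e ∈ W, G.Adj e.1 e.2 := by
  obtain ⟨S, T, hS, hT, hne, x, hxS, hxT⟩ := h
  obtain ⟨m, hm, c, -, hcG, rfl⟩ := hS.exists_cycleArcs
  obtain ⟨m', hm', d, -, hdG, rfl⟩ := hT.exists_cycleArcs
  obtain ⟨i, -, rfl⟩ := mem_image.1 (onArcSet_cycleArcs.1 hxS)
  obtain ⟨j, -, hij⟩ := mem_image.1 (onArcSet_cycleArcs.1 hxT)
  set U := univ.image c ∪ univ.image d
  have hUlt : #U < (m + 1) + (m' + 1) := card_vertices_lt_of_meet hij.symm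
  have hUW : #U + 1 ≤ #(cycleArcs c ∪ cycleArcs d) :=
    card_vertices_lt_card_arcs_of_meet (fun h => hne (congrArg _ h)) hij.symm
  have hsub : cycleArcs c ∪ cycleArcs d ⊆ U ×ˢ U := union_subset
    ((cycleArcs_subset_product c).trans
      (product_subset_product subset_union_left subset_union_left))
    ((cycleArcs_subset_product d).trans
      (product_subset_product subset_union_right subset_union_right))
  obtain ⟨W, hW, hWcard⟩ := exists_subset_card_eq hUW
  refine ⟨#U, by omega, W, ?_, fun e he => ?_⟩
  · exact mem_biUnion.2 ⟨U, by simp, mem_powersetCard.2 ⟨hW.trans hsub, hWcard⟩⟩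
  · exact (mem_union.1 (hW he)).elim (hcG e) (hdG e)

end ShortCycles

section RandomOrientedGraph

variable {a : ℕ} (D : OrientedGraph (Fin a)) (n ℓ : ℕ) (p : I)

lemma measureReal_lt_numShortCycles_le {t : ℝ} (ht : 0 < t) :
    (model a n p).real {ω | t < numShortCycles (Dhat D n ω) ℓ} ≤
      (∑ m ∈ range (ℓ - 1), (a * n * p : ℝ) ^ (m + 1)) / t := by
  calc (model a n p).real {ω | t < numShortCycles (Dhat D n ω) ℓ}
      ≤ (model a n p).real
          {ω | t < #{q ∈ shortCyclicSeqs (Vtx a n) ℓ | ∀ e ∈ cycleArcs q.2, ω e = true}} :=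
        measureReal_mono fun ω (hω : t < _) => hω.trans_le <| Nat.cast_le.2 <|
          numShortCycles_le_card_filter fun _ _ hxy => hxy.2
    _ ≤ (∑ q ∈ shortCyclicSeqs (Vtx a n) ℓ, (p : ℝ) ^ #(cycleArcs q.2)) / t :=
        measureReal_pi_bernoulliBool_lt_card_filter_le p _ _ ht
    _ ≤ (∑ m ∈ range (ℓ - 1), (a * n * p : ℝ) ^ (m + 1)) / t := by
        gcongr
        simpa using sum_shortCyclicSeqs_pow_card_cycleArcs_le (V := Vtx a n) ℓ p.2.1

lemma measureReal_shortCyclesMeet_le :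
    (model a n p).real {ω | ShortCyclesMeet (Dhat D n ω) ℓ} ≤
      ∑ v ∈ range (2 * ℓ - 2), (a * n : ℝ) ^ v * (v * v) ^ (v + 1) * p ^ (v + 1) := by
  calc (model a n p).real {ω | ShortCyclesMeet (Dhat D n ω) ℓ}
      ≤ (model a n p).real {ω | ∃ q ∈ (range (2 * ℓ - 2)).sigma (denseArcSets (Vtx a n)),
          ∀ e ∈ q.2, ω e = true} := by
        refine measureReal_mono fun ω hω => ?_
        obtain ⟨v, hv, W, hW, hadj⟩ := ShortCyclesMeet.exists_mem_denseArcSets hω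
        exact ⟨⟨v, W⟩, mem_sigma.2 ⟨mem_range.2 hv, hW⟩, fun e he => (hadj e he).2⟩
    _ ≤ ∑ q ∈ (range (2 * ℓ - 2)).sigma (denseArcSets (Vtx a n)), (p : ℝ) ^ #q.2 :=
        measureReal_pi_bernoulliBool_exists_forall_mem_le p _ _
    _ = ∑ v ∈ range (2 * ℓ - 2), #(denseArcSets (Vtx a n) v) * (p : ℝ) ^ (v + 1) := by
        rw [sum_sigma]
        refine sum_congr rfl fun v _ => ?_
        rw [sum_congr rfl fun W hW => by rw [card_of_mem_denseArcSets hW], sum_const, nsmul_eq_mul]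
    _ ≤ ∑ v ∈ range (2 * ℓ - 2), (a * n : ℝ) ^ v * (v * v) ^ (v + 1) * p ^ (v + 1) := by
        gcongr with v _
        · exact pow_nonneg p.2.1 _
        · exact_mod_cast (card_denseArcSets_le (V := Vtx a n) v).trans_eq (by simp)

end RandomOrientedGraph

section Asymptotics

lemma tendsto_sum_mul_rpow_atTop_nhds_zero {ι : Type*} (s : Finset ι) (C : ι → ℝ) {b : ι → ℝ}
    (hb : ∀ i ∈ s, b i < 0) :
    Tendsto (fun x : ℝ => ∑ i ∈ s, C i * x ^ b i) atTop (𝓝 0) := by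
  rw [← sum_const_zero (s := s)]
  refine tendsto_finsetSum s fun i hi => ?_
  simpa using (tendsto_rpow_neg_atTop (neg_pos.2 (hb i hi))).const_mul (C i)

lemma tendsto_sum_pow_div_rpow_atTop_nhds_zero (a : ℝ) (ℓ : ℕ) {ε : ℝ} (hε : 0 < ε) :
    Tendsto (fun x : ℝ => (∑ m ∈ range (ℓ - 1), (a * x * x ^ (ε - 1)) ^ (m + 1)) / x ^ (ε * ℓ))
      atTop (𝓝 0) := by
  have hneg : ∀ m ∈ range (ℓ - 1), ε * ((m : ℝ) + 1 - ℓ) < 0 := by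
    intro m hm
    have hmℓ : (m : ℝ) + 1 < ℓ := by
      exact_mod_cast Nat.add_lt_of_lt_sub (mem_range.1 hm)
    exact mul_neg_of_pos_of_neg hε (sub_neg.2 hmℓ)
  refine (tendsto_sum_mul_rpow_atTop_nhds_zero _ (fun m => a ^ (m + 1)) hneg).congr' ?_
  filter_upwards [eventually_gt_atTop 0] with x hx
  rw [sum_div]
  refine sum_congr rfl fun m _ => ?_
  rw [mul_assoc a, ← Real.rpow_one_add' hx.le (by linarith), add_sub_cancel, mul_pow,
    mul_div_assoc, ← Real.rpow_mul_natCast hx.le, ← Real.rpow_sub hx]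
  push_cast
  ring_nf

lemma tendsto_sum_pow_mul_rpow_pow_atTop_nhds_zero (a : ℝ) (ℓ : ℕ) {ε : ℝ} (hε0 : 0 < ε)
    (hε : ε * (2 * (ℓ - 1)) < 1) (C : ℕ → ℝ) :
    Tendsto (fun x : ℝ => ∑ v ∈ range (2 * ℓ - 2), (a * x) ^ v * C v * (x ^ (ε - 1)) ^ (v + 1))
      atTop (𝓝 0) := by
  have hneg : ∀ v ∈ range (2 * ℓ - 2), ε * ((v : ℝ) + 1) - 1 < 0 := by
    intro v hv
    have hvℓ : (v : ℝ) + 1 ≤ 2 * (ℓ - 1) := by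
      have : v + 1 + 2 ≤ 2 * ℓ := by have := mem_range.1 hv; omega
      have : (v : ℝ) + 1 + 2 ≤ 2 * ℓ := by exact_mod_cast this
      linarith
    nlinarith
  refine (tendsto_sum_mul_rpow_atTop_nhds_zero _ (fun v => a ^ v * C v) hneg).congr' ?_
  filter_upwards [eventually_gt_atTop 0] with x hx
  refine sum_congr rfl fun v _ => ?_
  have hexp : x ^ v * (x ^ (ε - 1)) ^ (v + 1) = x ^ (ε * (v + 1) - 1) := by
    rw [← Real.rpow_mul_natCast hx.le, ← Real.rpow_natCast, ← Real.rpow_add hx]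
    push_cast
    ring_nf
  rw [← hexp]
  ring

lemma natCast_rpow_mem_unitInterval (n : ℕ) {x : ℝ} (hx : x ≤ 0) : (n : ℝ) ^ x ∈ I := by
  refine ⟨by positivity, ?_⟩
  rcases n.eq_zero_or_pos with rfl | hn
  · simpa using Real.zero_rpow_le_one x
  · exact Real.rpow_le_one_of_one_le_of_nonpos (by exact_mod_cast hn) hx

lemma tendsto_measure_nhds_one_of_tendsto_measureReal_compl {ι : Type*} {l : Filter ι}
    {Ω : ι → Type*} [∀ i, MeasurableSpace (Ω i)] (μ : ∀ i, Measure (Ω i))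
    [∀ i, IsProbabilityMeasure (μ i)] {S : ∀ i, Set (Ω i)}
    (h : Tendsto (fun i => (μ i).real (S i)ᶜ) l (𝓝 0)) :
    Tendsto (fun i => μ i (S i)) l (𝓝 1) := by
  have hsub : Tendsto (fun i => 1 - μ i (S i)ᶜ) l (𝓝 1) := by
    simpa using ENNReal.Tendsto.sub tendsto_const_nhds (ENNReal.tendsto_ofReal h)
      (.inl ENNReal.one_ne_top)
  refine tendsto_of_tendsto_of_tendsto_of_le_of_le hsub tendsto_const_nhds (fun i => ?_)
    fun i => prob_le_one
  rw [tsub_le_iff_right, ← measure_univ (μ := μ i), ← Set.union_compl_self (S i)]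
  exact measure_union_le _ _

end Asymptotics

theorem aas_few_disjoint_short_cycles_general (a : ℕ) (D : OrientedGraph (Fin a)) (ℓ : ℕ) (ε : ℝ)
    (hε0 : 0 < ε) (hε1 : ε ≤ 1) (hε : ε * (2 * (ℓ - 1)) < 1) :
    Tendsto
      (fun n : ℕ => model a n ((n : ℝ) ^ (ε - 1))
        {ω : Omega a n |
          ((numShortCycles (Dhat D n ω) ℓ : ℝ) ≤ (n : ℝ) ^ (ε * (ℓ : ℝ))) ∧
          ∀ S T : Set (Vtx a n × Vtx a n),
            IsShortCycleArcSet (Dhat D n ω) ℓ S → IsShortCycleArcSet (Dhat D n ω) ℓ T →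
            S ≠ T → ¬ ∃ x : Vtx a n, OnArcSet S x ∧ OnArcSet T x})
      atTop (𝓝 1) := by
  let p (n : ℕ) : I := ⟨(n : ℝ) ^ (ε - 1), natCast_rpow_mem_unitInterval n (by linarith)⟩
  have (n : ℕ) : IsProbabilityMeasure (model a n (p n)) :=
    isProbabilityMeasure_model (p n) a n
  refine tendsto_measure_nhds_one_of_tendsto_measureReal_compl
    (fun n : ℕ => model a n (p n)) ?_
  have hbound := ((tendsto_sum_pow_div_rpow_atTop_nhds_zero a ℓ hε0).add
    (tendsto_sum_pow_mul_rpow_pow_atTop_nhds_zero a ℓ hε0 hε fun v => (v * v) ^ (v + 1))).comp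
      tendsto_natCast_atTop_atTop
  rw [add_zero] at hbound
  refine squeeze_zero' (.of_forall fun n => measureReal_nonneg) ?_ hbound
  filter_upwards [eventually_gt_atTop 0] with n hn
  refine (measureReal_mono fun ω hω => ?_).trans <| (measureReal_union_le _ _).trans <| add_le_add
    (measureReal_lt_numShortCycles_le D n ℓ (p n) (t := (n : ℝ) ^ (ε * ℓ)) (by positivity))
    (measureReal_shortCyclesMeet_le D n ℓ (p n))
  refine or_iff_not_imp_left.2 fun hfew => ?_
  by_contra hmeet
  exact hω ⟨not_lt.1 hfew, fun S T hS hT hne hx => hmeet ⟨S, T, hS, hT, hne, hx⟩⟩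

/-- With `0 < ε < 1/(4ℓ)` and `p = n^(ε−1)`, the probability that a random oriented graph
drawn from `𝒟(n, p)` has at most `n^(εℓ)` directed cycles of length less than `ℓ`, all of
which are pairwise vertex-disjoint, tends to `1` as `n → ∞`. -/
theorem aas_few_disjoint_short_cycles (a : ℕ) (D : OrientedGraph (Fin a)) (k ℓ : ℕ)
    (hk : 0 < k) (hℓ : 0 < ℓ) (ε : ℝ) (hε0 : 0 < ε) (hε : ε < 1 / (4 * ℓ)) :
    Filter.Tendsto
      (fun n : ℕ => model a n ((n : ℝ) ^ (ε - 1))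
        {ω : Omega a n |
          ((numShortCycles (Dhat D n ω) ℓ : ℝ) ≤ (n : ℝ) ^ (ε * (ℓ : ℝ))) ∧
          ∀ S T : Set (Vtx a n × Vtx a n),
            IsShortCycleArcSet (Dhat D n ω) ℓ S → IsShortCycleArcSet (Dhat D n ω) ℓ T →
            S ≠ T → ¬ ∃ x : Vtx a n, OnArcSet S x ∧ OnArcSet T x})
      Filter.atTop (nhds 1) := by
  have hℓ1 : (1 : ℝ) ≤ ℓ := by exact_mod_cast hℓ
  rw [lt_div_iff₀ (by positivity)] at hε
  exact aas_few_disjoint_short_cycles_general a D ℓ ε hε0 (by nlinarith) (by nlinarith)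
end

section
/- Let D be a finite oriented graph with vertex set {1, …, a}, let k and ℓ be positive integers, fix ε with 0 < ε < 1/(4ℓ), and set p = n^{ε−1}. Then, as n → ∞, the probability that a random oriented graph D̂ drawn from 𝒟(n, p) satisfies |D̂/𝒜| ≥ n for every large set 𝒜 ⊆ V(D_0) tends to 1. -/
open MeasureTheory

/-- `i → j` is a good arc (of `D`) for the set `A ⊆ V(D₀)`: `i`, `j` are distinct,
`ij ∈ A(D)`, and `A` meets each of `V_i`, `V_j` in at least `n/k` vertices. -/
def GoodArc {a : ℕ} (D : OrientedGraph (Fin a)) (n k : ℕ) (A : Set (Vtx a n))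
    (i j : Fin a) : Prop :=
  i ≠ j ∧ D.Adj i j ∧
    (n : ℝ) / k ≤ Nat.card (A ∩ cellV a n i : Set (Vtx a n)) ∧
    (n : ℝ) / k ≤ Nat.card (A ∩ cellV a n j : Set (Vtx a n))

/-- `A ⊆ V(D₀)` is large: some arc of `D` is a good arc for `A`. -/
def IsLarge {a : ℕ} (D : OrientedGraph (Fin a)) (n k : ℕ) (A : Set (Vtx a n)) : Prop :=
  ∃ i j : Fin a, GoodArc D n k A i j

/-- `|D̂/A|`: the minimum, over all good arcs `i → j` for `A`, of the number of arcs of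
`D̂` from `A ∩ V_i` to `A ∩ V_j`. -/
noncomputable def quotCount {a : ℕ} (D : OrientedGraph (Fin a)) (n k : ℕ)
    (ω : Omega a n) (A : Set (Vtx a n)) : ℕ :=
  sInf {m : ℕ | ∃ i j : Fin a, GoodArc D n k A i j ∧
    m = Nat.card {p : Vtx a n × Vtx a n //
      p.1 ∈ A ∩ cellV a n i ∧ p.2 ∈ A ∩ cellV a n j ∧ (Dhat D n ω).Adj p.1 p.2}}

/-!
Fix `A` and an arc `i → j` good for it. The number of arcs of `D̂` from `A ∩ V_i` to `A ∩ V_j` is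
binomial with at least `(n/k)²` trials, so by Chernoff it is less than `n` with probability at most
`exp (n - p n² / (2k²))`. There are only `2^(an) a²` choices of `(A, i, j)`, so the union bound
succeeds as soon as `n p → ∞`; for `p = n^(ε-1)` this says `n^ε → ∞`.
-/

open Filter ProbabilityTheory Real
open scoped Topology

section Bernoulli

variable {p : ℝ} {E : Type*}

theorem isProbabilityMeasure_bernoulliBool_s15 (hp : p ∈ Set.Icc 0 1) :
    IsProbabilityMeasure (bernoulliBool p) := by
  refine ⟨?_⟩
  simp only [bernoulliBool, Measure.coe_add, Measure.coe_smul, Pi.add_apply, Pi.smul_apply,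
    measure_univ, smul_eq_mul, mul_one]
  rw [← ENNReal.ofReal_add hp.1 (sub_nonneg.2 hp.2), add_sub_cancel, ENNReal.ofReal_one]

theorem mgf_bernoulliBool (hp : p ∈ Set.Icc 0 1) (X : Bool → ℝ) (t : ℝ) :
    mgf X (bernoulliBool p) t = p * exp (t * X true) + (1 - p) * exp (t * X false) := by
  have integrable_smul (q : ℝ) (b : Bool) :
      Integrable (fun b => exp (t * X b)) (ENNReal.ofReal q • Measure.dirac b) :=
    Integrable.of_finite.smul_measure ENNReal.ofReal_ne_top
  rw [bernoulliBool, mgf_add_measure (integrable_smul _ _) (integrable_smul _ _), mgf_smul_measure,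
    mgf_smul_measure, mgf_dirac', mgf_dirac', ENNReal.toReal_ofReal hp.1,
    ENNReal.toReal_ofReal (sub_nonneg.2 hp.2)]

/-- The number of successes among the trials indexed by `S`, for an outcome `ω` of a family of
Boolean trials. -/
def successCount (S : Finset E) (ω : E → Bool) : ℕ := (S.filter fun e => ω e).card

theorem cast_successCount (S : Finset E) (ω : E → Bool) :
    (successCount S ω : ℝ) = ∑ e ∈ S, if ω e then 1 else 0 := by
  rw [successCount, Finset.sum_boole]

variable [Fintype E]

theorem mgf_successCount (hp : p ∈ Set.Icc 0 1) (S : Finset E) (t : ℝ) :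
    mgf (fun ω => (successCount S ω : ℝ)) (Measure.pi fun _ : E => bernoulliBool p) t =
      (1 + p * (exp t - 1)) ^ S.card := by
  have := isProbabilityMeasure_bernoulliBool_s15 hp
  let X : Bool → ℝ := fun b => if b then 1 else 0
  have sum_eq : (fun ω : E → Bool => (successCount S ω : ℝ)) = ∑ e ∈ S, fun ω => X (ω e) := by
    ext ω
    simp only [cast_successCount, Finset.sum_apply, X]
  have indep : iIndepFun (fun (e : E) (ω : E → Bool) => X (ω e))
      (Measure.pi fun _ => bernoulliBool p) :=
    iIndepFun_pi fun _ => (measurable_of_countable X).aemeasurable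
  have mgf_trial (e : E) : mgf (fun ω : E → Bool => X (ω e)) (Measure.pi fun _ => bernoulliBool p) t
      = 1 + p * (exp t - 1) := by
    calc mgf (fun ω : E → Bool => X (ω e)) (Measure.pi fun _ => bernoulliBool p) t
        = mgf X (bernoulliBool p) t :=
          integral_comp_eval (μ := fun _ : E => bernoulliBool p) (i := e)
            (f := fun b => exp (t * X b)) (measurable_of_countable _).aestronglyMeasurable
      _ = p * exp (t * 1) + (1 - p) * exp (t * 0) := mgf_bernoulliBool hp X t
      _ = 1 + p * (exp t - 1) := by rw [mul_one, mul_zero, exp_zero]; ring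
  rw [sum_eq, indep.mgf_sum (fun _ => measurable_of_countable _) S,
    Finset.prod_congr rfl fun e _ => mgf_trial e, Finset.prod_const]

theorem measureReal_successCount_le_le_exp (hp : p ∈ Set.Icc 0 1) (S : Finset E) {t : ℝ}
    (ht : t ≤ 0) (x : ℝ) :
    (Measure.pi fun _ : E => bernoulliBool p).real {ω | (successCount S ω : ℝ) ≤ x} ≤
      exp (-t * x + p * S.card * (exp t - 1)) := by
  have := isProbabilityMeasure_bernoulliBool_s15 hp
  have base_nonneg : 0 ≤ 1 + p * (exp t - 1) := by
    nlinarith [hp.1, hp.2, exp_pos t]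
  calc (Measure.pi fun _ : E => bernoulliBool p).real {ω | (successCount S ω : ℝ) ≤ x}
      ≤ exp (-t * x) * (1 + p * (exp t - 1)) ^ S.card := by
        rw [← mgf_successCount hp]
        exact measure_le_le_exp_mul_mgf x ht .of_finite
    _ ≤ exp (-t * x) * exp (p * (exp t - 1)) ^ S.card := by
        gcongr
        linarith [add_one_le_exp (p * (exp t - 1))]
    _ = exp (-t * x + p * S.card * (exp t - 1)) := by
        rw [← exp_nat_mul, ← exp_add]
        ring_nf

theorem measureReal_successCount_le_le_exp_sub_half (hp : p ∈ Set.Icc 0 1) (S : Finset E) (x : ℝ) :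
    (Measure.pi fun _ : E => bernoulliBool p).real {ω | (successCount S ω : ℝ) ≤ x} ≤
      exp (x - p * S.card / 2) := by
  refine (measureReal_successCount_le_le_exp hp S (t := -1) (by norm_num) x).trans ?_
  have mean_nonneg : 0 ≤ p * S.card := mul_nonneg hp.1 S.card.cast_nonneg
  gcongr
  nlinarith [exp_neg_one_lt_half]

end Bernoulli

section RandomOrientedGraph

variable {a n k : ℕ} {D : OrientedGraph (Fin a)} {A : Set (Vtx a n)} {i j : Fin a} {p : ℝ}

theorem isProbabilityMeasure_model_s15 (a n : ℕ) (hp : p ∈ Set.Icc 0 1) :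
    IsProbabilityMeasure (model a n p) := by
  have := isProbabilityMeasure_bernoulliBool_s15 hp
  exact inferInstanceAs (IsProbabilityMeasure (Measure.pi fun _ => bernoulliBool p))

open Classical in
/-- The pairs in `(A ∩ V_i) × (A ∩ V_j)`: when `i → j` is an arc of `D`, these are the potential
arcs of `D̂` from `A ∩ V_i` to `A ∩ V_j`. -/
noncomputable def crossPairs (A : Set (Vtx a n)) (i j : Fin a) : Finset (Vtx a n × Vtx a n) :=
  ((A ∩ cellV a n i) ×ˢ (A ∩ cellV a n j)).toFinset

theorem sq_div_le_card_crossPairs (h : GoodArc D n k A i j) :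
    ((n : ℝ) / k) ^ 2 ≤ (crossPairs A i j).card := by
  obtain ⟨-, -, hi, hj⟩ := h
  rw [crossPairs, ← Set.ncard_eq_toFinset_card', Set.ncard_prod, Nat.cast_mul, sq]
  gcongr
  · exact hi
  · exact hj

theorem card_arcs_eq_successCount (hij : D.Adj i j) (ω : Omega a n) :
    Nat.card {e : Vtx a n × Vtx a n //
      e.1 ∈ A ∩ cellV a n i ∧ e.2 ∈ A ∩ cellV a n j ∧ (Dhat D n ω).Adj e.1 e.2} =
      successCount (crossPairs A i j) ω := by
  refine Nat.subtype_card _ fun e => ?_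
  simp only [crossPairs, Finset.mem_filter, Set.mem_toFinset, Set.mem_prod, and_assoc]
  refine and_congr_right fun hi => and_congr_right fun hj => (and_iff_right ?_).symm
  rwa [show e.1.1 = i from hi.2, show e.2.1 = j from hj.2]

theorem le_quotCount_iff (hA : IsLarge D n k A) (ω : Omega a n) (m : ℕ) :
    m ≤ quotCount D n k ω A ↔
      ∀ i j, GoodArc D n k A i j → m ≤ successCount (crossPairs A i j) ω := by
  obtain ⟨i₀, j₀, h₀⟩ := hA
  rw [quotCount, le_csInf_iff (OrderBot.bddBelow _) ?nonempty]
  case nonempty => exact ⟨_, i₀, j₀, h₀, rfl⟩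
  constructor
  · intro h i j hij
    rw [← card_arcs_eq_successCount hij.2.1]
    exact h _ ⟨i, j, hij, rfl⟩
  · rintro h _ ⟨i, j, hij, rfl⟩
    rw [card_arcs_eq_successCount hij.2.1]
    exact h i j hij

/-- The event that `|D̂/A| ≥ n` for every large set `A`. -/
def manyArcsEvent (D : OrientedGraph (Fin a)) (n k : ℕ) : Set (Omega a n) :=
  {ω | ∀ A : Set (Vtx a n), IsLarge D n k A → n ≤ quotCount D n k ω A}

theorem compl_manyArcsEvent_subset (D : OrientedGraph (Fin a)) (n k : ℕ) :
    (manyArcsEvent D n k)ᶜ ⊆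
      ⋃ c : {c : Set (Vtx a n) × Fin a × Fin a // GoodArc D n k c.1 c.2.1 c.2.2},
        {ω | (successCount (crossPairs c.1.1 c.1.2.1 c.1.2.2) ω : ℝ) ≤ n} := by
  intro ω hω
  simp only [manyArcsEvent, Set.mem_compl_iff, Set.mem_ofPred_eq, not_forall] at hω
  obtain ⟨A, hA, few⟩ := hω
  simp only [le_quotCount_iff hA, not_forall, not_le] at few
  obtain ⟨i, j, hij, few⟩ := few
  exact Set.mem_iUnion.2 ⟨⟨(A, i, j), hij⟩, Set.mem_ofPred.2 (Nat.cast_le.2 few.le)⟩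

theorem measureReal_successCount_crossPairs_le (hp : p ∈ Set.Icc 0 1) (h : GoodArc D n k A i j) :
    (model a n p).real {ω | (successCount (crossPairs A i j) ω : ℝ) ≤ n} ≤
      exp (n - p * (n / k) ^ 2 / 2) := by
  refine (measureReal_successCount_le_le_exp_sub_half hp _ _).trans ?_
  gcongr
  · exact hp.1
  · exact sq_div_le_card_crossPairs h

theorem measureReal_compl_manyArcsEvent_le (D : OrientedGraph (Fin a)) (n k : ℕ)
    (hp : p ∈ Set.Icc 0 1) :
    (model a n p).real (manyArcsEvent D n k)ᶜ ≤
      a ^ 2 * exp (n * (a + 1 - n * p / (2 * k ^ 2))) := by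
  classical
  have := isProbabilityMeasure_model_s15 a n hp
  let Choice := Set (Vtx a n) × Fin a × Fin a
  let IsGood : Choice → Prop := fun c => GoodArc D n k c.1 c.2.1 c.2.2
  have card_good : (Fintype.card {c // IsGood c} : ℝ) ≤ 2 ^ (a * n) * a ^ 2 := by
    have card_choice : Fintype.card Choice = 2 ^ (a * n) * a ^ 2 := by
      simp only [Choice, Fintype.card_prod, Fintype.card_fin, Fintype.card_set, sq]
    exact_mod_cast card_choice ▸ Fintype.card_subtype_le IsGood
  have two_pow_le : (2 : ℝ) ^ (a * n) ≤ exp (a * n) := by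
    rw [← Nat.cast_mul, ← exp_one_pow]
    gcongr
    linarith [add_one_le_exp (1 : ℝ)]
  calc (model a n p).real (manyArcsEvent D n k)ᶜ
      ≤ ∑ c : {c // IsGood c}, (model a n p).real
          {ω | (successCount (crossPairs c.1.1 c.1.2.1 c.1.2.2) ω : ℝ) ≤ n} :=
        (measureReal_mono (compl_manyArcsEvent_subset D n k)).trans
          (measureReal_iUnion_fintype_le _)
    _ ≤ ∑ _c : {c // IsGood c}, exp (n - p * (n / k) ^ 2 / 2) :=
        Finset.sum_le_sum fun c _ => measureReal_successCount_crossPairs_le hp c.2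
    _ = Fintype.card {c // IsGood c} * exp (n - p * (n / k) ^ 2 / 2) := by
        rw [Finset.sum_const, Finset.card_univ, nsmul_eq_mul]
    _ ≤ exp (a * n) * a ^ 2 * exp (n - p * (n / k) ^ 2 / 2) := by
        gcongr
        exact card_good.trans (by gcongr)
    _ = a ^ 2 * exp (n * (a + 1 - n * p / (2 * k ^ 2))) := by
        rw [mul_comm (exp _), mul_assoc, ← exp_add]
        ring_nf

end RandomOrientedGraph

theorem tendsto_const_mul_exp_natCast_mul_sub_div {u : ℕ → ℝ} (hu : Tendsto u atTop atTop)
    (b c : ℝ) {d : ℝ} (hd : 0 < d) :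
    Tendsto (fun n : ℕ => c * exp (n * (b - u n / d))) atTop (𝓝 0) := by
  have exponent : Tendsto (fun n : ℕ => (n : ℝ) * (b - u n / d)) atTop atBot :=
    tendsto_natCast_atTop_atTop.atTop_mul_atBot₀
      (tendsto_atBot_add_const_left _ b (tendsto_neg_atTop_atBot.comp (hu.atTop_div_const hd)))
  simpa only [mul_zero, Function.comp_def] using
    (tendsto_exp_atBot.comp exponent).const_mul c

theorem rpow_sub_one_mem_Icc {x ε : ℝ} (hx : 1 ≤ x) (hε : ε ≤ 1) :
    x ^ (ε - 1) ∈ Set.Icc 0 1 :=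
  ⟨by positivity, rpow_le_one_of_one_le_of_nonpos hx (sub_nonpos.2 hε)⟩

theorem tendsto_mul_rpow_sub_one_atTop {ε : ℝ} (hε : 0 < ε) :
    Tendsto (fun x : ℝ => x * x ^ (ε - 1)) atTop atTop := by
  refine (tendsto_rpow_atTop hε).congr' ?_
  filter_upwards [eventually_gt_atTop 0] with x hx
  rw [rpow_sub_one hx.ne', mul_div_cancel₀ _ hx.ne']

theorem aas_large_sets_induce_many_arcs_general (a : ℕ) (D : OrientedGraph (Fin a)) (k : ℕ)
    (hk : 0 < k) (p : ℕ → ℝ) (hp : ∀ᶠ n in atTop, p n ∈ Set.Icc 0 1)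
    (hnp : Tendsto (fun n : ℕ => n * p n) atTop atTop) :
    Tendsto
      (fun n : ℕ => model a n (p n)
        {ω : Omega a n | ∀ A : Set (Vtx a n), IsLarge D n k A → n ≤ quotCount D n k ω A})
      atTop (𝓝 1) := by
  have failure := tendsto_const_mul_exp_natCast_mul_sub_div hnp (a + 1) (a ^ 2)
    (d := 2 * (k : ℝ) ^ 2) (by positivity)
  have lower_tendsto := ENNReal.tendsto_ofReal (failure.const_sub 1)
  rw [sub_zero, ENNReal.ofReal_one] at lower_tendsto
  refine tendsto_of_tendsto_of_tendsto_of_le_of_le' lower_tendsto tendsto_const_nhds ?_ ?_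
  · filter_upwards [hp] with n hpn
    have := isProbabilityMeasure_model_s15 a n hpn
    have compl_le := measureReal_compl_manyArcsEvent_le D n k hpn
    rw [probReal_compl_eq_one_sub (Set.toFinite _).measurableSet] at compl_le
    exact ENNReal.ofReal_le_of_le_toReal (sub_le_comm.1 compl_le)
  · filter_upwards [hp] with n hpn
    have := isProbabilityMeasure_model_s15 a n hpn
    exact prob_le_one

/-- **Lemma 6.** With `0 < ε < 1/(4ℓ)` and `p = n^(ε−1)`, the probability that a random
oriented graph `D̂` drawn from `𝒟(n, p)` satisfies `|D̂/A| ≥ n` for every large set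
`A ⊆ V(D₀)` tends to `1` as `n → ∞`. -/
theorem aas_large_sets_induce_many_arcs (a : ℕ) (D : OrientedGraph (Fin a)) (k ℓ : ℕ)
    (hk : 0 < k) (hℓ : 0 < ℓ) (ε : ℝ) (hε0 : 0 < ε) (hε : ε < 1 / (4 * ℓ)) :
    Filter.Tendsto
      (fun n : ℕ => model a n ((n : ℝ) ^ (ε - 1))
        {ω : Omega a n | ∀ A : Set (Vtx a n), IsLarge D n k A → n ≤ quotCount D n k ω A})
      Filter.atTop (nhds 1) := by
  have hε1 : ε ≤ 1 := hε.le.trans (div_le_one_of_le₀ (by norm_cast; lia) (by positivity))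
  exact aas_large_sets_induce_many_arcs_general a D k hk _
    ((eventually_ge_atTop 1).mono fun n hn => rpow_sub_one_mem_Icc (Nat.one_le_cast.2 hn) hε1)
    ((tendsto_mul_rpow_sub_one_atTop hε0).comp tendsto_natCast_atTop_atTop)
end
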